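/- arXiv:1608.00857 — 2 statements merged into one kernel-verified Lean document; each statement's English description precedes it below -/
import Mathlib

section
/- For every integer m ≥ 1 there are constants D₁, D₂ > 0 depending only on m such that for every nonempty closed set Z ⊊ ℝ^m there exists an m-dimensional simplicial complex Σ in ℝ^m with Σ^{(m)} = ℝ^m ∖ Z and such that every m-simplex σ ∈ Σ satisfies: diam(σ) ≤ dist(σ, Z) ≤ 12√m · diam(σ), and D₁ < diam(σ)/B_σ ≤ diam(σ)/β_σ < D₂. -/
open MeasureTheory Metric Set
noncomputable section

/-- `Euc d` is `ℝ^d` with the Euclidean metric. -/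
abbrev Euc (d : ℕ) := EuclideanSpace ℝ (Fin d)

/-- The `k`-skeleton (as a subset of `ℝ^m`) of a simplicial complex: the union of all of
its `k`-simplices (faces with `k+1` vertices). -/
def skel (m : ℕ) (K : Geometry.SimplicialComplex ℝ (Euc m)) (k : ℕ) : Set (Euc m) :=
  ⋃ s ∈ {s ∈ K.faces | s.card = k + 1}, convexHull ℝ (s : Set (Euc m))

/-- The diameter of the simplex spanned by the vertex set `s`. -/
def simpDiam (m : ℕ) (s : Finset (Euc m)) : ℝ :=
  Metric.diam (convexHull ℝ (s : Set (Euc m)))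

/-- The distance between two subsets of `ℝ^m`. -/
def setDist (m : ℕ) (A B : Set (Euc m)) : ℝ :=
  sInf (Set.image2 dist A B)

/-- `β(ω)` for the simplex with vertex set `ω`: the minimum distance from the barycenter
of `ω` to an affine plane spanned by a face of codimension one. -/
def faceBetaMin (m : ℕ) (ω : Finset (Euc m)) : ℝ :=
  sInf { d | ∃ t ⊆ ω, t.card = ω.card - 1 ∧
    d = Metric.infDist (ω.centroid ℝ id)
          ((affineSpan ℝ (t : Set (Euc m)) : AffineSubspace ℝ (Euc m)) : Set (Euc m)) }

/-- `B(ω)` for the simplex with vertex set `ω`: the maximum distance from the barycenter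
of `ω` to an affine plane spanned by a face of codimension one. -/
def faceBetaMax (m : ℕ) (ω : Finset (Euc m)) : ℝ :=
  sSup { d | ∃ t ⊆ ω, t.card = ω.card - 1 ∧
    d = Metric.infDist (ω.centroid ℝ id)
          ((affineSpan ℝ (t : Set (Euc m)) : AffineSubspace ℝ (Euc m)) : Set (Euc m)) }

/-- `β_σ`: the minimum of `β(ω)` over all faces `ω` of `σ` of dimension `≥ 1`. -/
def betaLow (m : ℕ) (σ : Finset (Euc m)) : ℝ :=
  sInf { b | ∃ ω ⊆ σ, 2 ≤ ω.card ∧ b = faceBetaMin m ω }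

/-- `B_σ`: the maximum of `B(ω)` over all faces `ω` of `σ` of dimension `≥ 1`. -/
def betaHigh (m : ℕ) (σ : Finset (Euc m)) : ℝ :=
  sSup { b | ∃ ω ⊆ σ, 2 ≤ ω.card ∧ b = faceBetaMax m ω }

/-- The conclusions of the Whitney triangulation lemma for the closed set `Z ⊂ ℝ^m`:
`K` is an `m`-dimensional simplicial complex whose `m`-skeleton is `ℝ^m ∖ Z`, all of
whose `m`-simplices `σ` satisfy `diam σ ≤ dist(σ,Z) ≤ 12√m diam σ` and
`D₁ < diam σ / B_σ ≤ diam σ / β_σ < D₂`. -/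
def WhitneyConclusions (m : ℕ) (D₁ D₂ : ℝ) (Z : Set (Euc m))
    (K : Geometry.SimplicialComplex ℝ (Euc m)) : Prop :=
  (∀ s ∈ K.faces, s.card ≤ m + 1) ∧
  skel m K m = Zᶜ ∧
  ∀ σ ∈ K.faces, σ.card = m + 1 →
    simpDiam m σ ≤ setDist m (convexHull ℝ (σ : Set (Euc m))) Z ∧
    setDist m (convexHull ℝ (σ : Set (Euc m))) Z ≤ 12 * Real.sqrt m * simpDiam m σ ∧
    D₁ < simpDiam m σ / betaHigh m σ ∧
    simpDiam m σ / betaHigh m σ ≤ simpDiam m σ / betaLow m σ ∧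
    simpDiam m σ / betaLow m σ < D₂

namespace Whit

/-! ### One-dimensional dyadic grid facts -/

/-- `b` lies in the closed level-`k` cell of `a`. -/
def cl1 (k : ℤ) (a b : ℝ) : Prop :=
  ((⌊(2:ℝ)^k * a⌋ : ℤ) : ℝ) ≤ (2:ℝ)^k * b ∧ (2:ℝ)^k * b ≤ ((⌈(2:ℝ)^k * a⌉ : ℤ) : ℝ)

/-- `a` and `b` lie in a common closed level-`k` interval. -/
def near1 (k : ℤ) (a b : ℝ) : Prop :=
  ∃ j : ℤ, (j:ℝ) ≤ (2:ℝ)^k * a ∧ (2:ℝ)^k * a ≤ j + 1 ∧ (j:ℝ) ≤ (2:ℝ)^k * b ∧ (2:ℝ)^k * b ≤ j + 1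

/-- `a` is in the interior of a level-`k` interval. -/
def act1 (k : ℤ) (a : ℝ) : Prop := ∀ j : ℤ, (2:ℝ)^k * a ≠ j

lemma split {k n : ℤ} (h : k ≤ n) : ∃ M : ℤ, 0 < M ∧ (2:ℝ)^n = M * (2:ℝ)^k := by
  refine ⟨2 ^ (n - k).toNat, by positivity, ?_⟩
  push_cast
  rw [← zpow_natCast, ← zpow_add₀ two_ne_zero]
  congr 1
  omega

lemma cl1_refl (k : ℤ) (a : ℝ) : cl1 k a a := ⟨Int.floor_le _, Int.le_ceil _⟩

lemma cl1_floor {k : ℤ} {a b : ℝ} (h : cl1 k a b) : ⌊(2:ℝ)^k * a⌋ ≤ ⌊(2:ℝ)^k * b⌋ :=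
  Int.le_floor.2 h.1

lemma cl1_ceil {k : ℤ} {a b : ℝ} (h : cl1 k a b) : ⌈(2:ℝ)^k * b⌉ ≤ ⌈(2:ℝ)^k * a⌉ :=
  Int.ceil_le.2 h.2

lemma cl1_near {k n : ℤ} (h : k ≤ n) {a b c : ℝ} (hab : cl1 n a b) (hac : near1 k a c) :
    near1 k b c := by
  obtain ⟨M, hM, e⟩ := split h
  obtain ⟨j, h1, h2, h3, h4⟩ := hac
  have hM' : (0:ℝ) < M := by exact_mod_cast hM
  obtain ⟨u, v⟩ := hab
  rw [e, mul_assoc, mul_assoc] at u v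
  refine ⟨j, ?_, ?_, h3, h4⟩
  · have : M * j ≤ ⌊(M:ℝ) * ((2:ℝ)^k * a)⌋ := Int.le_floor.2 (by push_cast; gcongr)
    have : ((M * j : ℤ) : ℝ) ≤ _ := (Int.cast_le.2 this).trans u
    push_cast at this
    exact le_of_mul_le_mul_left this hM'
  · have : ⌈(M:ℝ) * ((2:ℝ)^k * a)⌉ ≤ M * (j+1) := Int.ceil_le.2 (by push_cast; gcongr)
    have : _ ≤ ((M * (j+1) : ℤ) : ℝ) := v.trans (Int.cast_le.2 this)
    push_cast at this
    exact le_of_mul_le_mul_left this hM'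

lemma cl1_coarse {k n : ℤ} (h : k ≤ n) {a b : ℝ} (hab : cl1 n a b) : cl1 k a b := by
  obtain ⟨M, hM, e⟩ := split h
  have hM' : (0:ℝ) < M := by exact_mod_cast hM
  obtain ⟨u, v⟩ := hab
  rw [e, mul_assoc, mul_assoc] at u v
  constructor
  · have : M * ⌊(2:ℝ)^k * a⌋ ≤ ⌊(M:ℝ) * ((2:ℝ)^k * a)⌋ :=
      Int.le_floor.2 (by push_cast; gcongr; exact Int.floor_le _)
    have : ((M * ⌊(2:ℝ)^k * a⌋ : ℤ) : ℝ) ≤ _ := (Int.cast_le.2 this).trans u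
    push_cast at this
    exact le_of_mul_le_mul_left this hM'
  · have : ⌈(M:ℝ) * ((2:ℝ)^k * a)⌉ ≤ M * ⌈(2:ℝ)^k * a⌉ :=
      Int.ceil_le.2 (by push_cast; gcongr; exact Int.le_ceil _)
    have : _ ≤ ((M * ⌈(2:ℝ)^k * a⌉ : ℤ) : ℝ) := v.trans (Int.cast_le.2 this)
    push_cast at this
    exact le_of_mul_le_mul_left this hM'

lemma cl1_trans {k n : ℤ} (h : k ≤ n) {a b c : ℝ} (hab : cl1 k a b) (hbc : cl1 n b c) :
    cl1 k a c := by
  have := cl1_coarse h hbc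
  exact ⟨(Int.cast_le.2 (cl1_floor hab)).trans this.1,
    this.2.trans (Int.cast_le.2 (cl1_ceil hab))⟩

lemma near1_of_cl1 {k : ℤ} {a b : ℝ} (h : cl1 k a b) : near1 k a b := by
  have hc : ((⌈(2:ℝ)^k * a⌉ : ℤ) : ℝ) ≤ ⌊(2:ℝ)^k * a⌋ + 1 := by
    exact_mod_cast Int.ceil_le_floor_add_one _
  exact ⟨_, Int.floor_le _, (Int.lt_floor_add_one _).le, h.1, h.2.trans hc⟩

lemma near1_refl (k : ℤ) (a : ℝ) : near1 k a a := near1_of_cl1 (cl1_refl k a)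

lemma near1_coarse {k n : ℤ} (h : k ≤ n) {a b : ℝ} (hab : near1 n a b) : near1 k a b := by
  obtain ⟨M, hM, e⟩ := split h
  have hM' : (0:ℝ) < M := by exact_mod_cast hM
  obtain ⟨j, h1, h2, h3, h4⟩ := hab
  rw [e, mul_assoc] at h1 h2 h3 h4
  have hq : M * (j / M) ≤ j := Int.mul_ediv_self_le (by omega)
  have hq' : j + 1 ≤ M * (j / M + 1) := by
    have := Int.lt_mul_ediv_self_add (x := j) hM
    rw [mul_add, mul_one]; omega
  have hqR : (M:ℝ) * ((j / M : ℤ):ℝ) ≤ j := by exact_mod_cast hq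
  have hqR' : (j:ℝ) + 1 ≤ M * (((j / M : ℤ):ℝ) + 1) := by exact_mod_cast hq'
  exact ⟨j / M, le_of_mul_le_mul_left (hqR.trans h1) hM', le_of_mul_le_mul_left (h2.trans hqR') hM',
    le_of_mul_le_mul_left (hqR.trans h3) hM', le_of_mul_le_mul_left (h4.trans hqR') hM'⟩

lemma near1_dist {k : ℤ} {a b : ℝ} (h : near1 k a b) : |a - b| ≤ (2:ℝ)^(-k) := by
  obtain ⟨j, h1, h2, h3, h4⟩ := h
  have hp : (0:ℝ) < 2^k := by positivity
  have : |(2:ℝ)^k * (a - b)| ≤ 1 := abs_le.2 ⟨by linarith, by linarith⟩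
  rw [abs_mul, abs_of_pos hp] at this
  rw [zpow_neg, ← one_div, le_div_iff₀ hp]
  linarith

lemma act1_coarse {k n : ℤ} (h : k ≤ n) {a : ℝ} (ha : act1 n a) : act1 k a := by
  obtain ⟨M, hM, e⟩ := split h
  intro j hj
  apply ha (M * j)
  rw [e, mul_assoc, hj]; push_cast; rfl

/-- the strict convexity lemma -/
lemma floor_ceil_eq {t x l : ℝ} (hl : 0 < l) (h1 : l * (t - ⌊t⌋) ≤ x - ⌊t⌋)
    (h2 : l * (⌈t⌉ - t) ≤ ⌈t⌉ - x) : ⌊x⌋ = ⌊t⌋ ∧ ⌈x⌉ = ⌈t⌉ := by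
  have a1 := Int.floor_le t
  have a2 := Int.le_ceil t
  have b1 : (⌊t⌋:ℝ) ≤ x := by nlinarith
  have b2 : x ≤ ⌈t⌉ := by nlinarith
  rcases (Int.floor_le t).eq_or_lt with h | h
  · have hc : ⌈t⌉ = ⌊t⌋ := by rw [← h]; simp
    rw [hc] at b2 ⊢
    have : x = ⌊t⌋ := le_antisymm b2 b1
    rw [this]; simp
  · have hc : (⌈t⌉:ℝ) ≤ ⌊t⌋ + 1 := by exact_mod_cast Int.ceil_le_floor_add_one t
    have c1 : (⌊t⌋:ℝ) < x := by nlinarith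
    have d : t < ⌈t⌉ := by
      rcases a2.eq_or_lt with h' | h'
      · exfalso
        have : ⌊t⌋ = ⌈t⌉ := by rw [h']; simp
        rw [this] at h; linarith
      · exact h'
    have c2 : x < ⌈t⌉ := by nlinarith
    have hf : (⌊t⌋:ℤ) < ⌈t⌉ := by exact_mod_cast h.trans d
    have hc' : ⌈t⌉ = ⌊t⌋ + 1 := le_antisymm (Int.ceil_le_floor_add_one t) hf
    constructor
    · rw [Int.floor_eq_iff]; constructor <;> linarith
    · rw [Int.ceil_eq_iff]; constructor <;> [skip; linarith]
      rw [hc']; push_cast; linarith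

end Whit
namespace Whit

variable {m : ℕ}

/-- All level-`k` cubes containing `x` are good. -/
def G (Z : Set (Euc m)) (k : ℤ) (x : Euc m) : Prop :=
  ∀ p : Euc m, (∀ i, near1 k (x i) (p i)) → ∀ z ∈ Z, Real.sqrt m * (2:ℝ)^(-k) ≤ dist p z

/-- The level of a point. -/
def lev (Z : Set (Euc m)) (x : Euc m) : ℤ := sInf {k | G Z k x}

def c1 (k : ℤ) (a : ℝ) : ℝ := (((⌊(2:ℝ)^k * a⌋ : ℤ) : ℝ) + ((⌈(2:ℝ)^k * a⌉ : ℤ) : ℝ)) / 2 * (2:ℝ)^(-k)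

/-- The centre of the cell of a point. -/
def ctr (Z : Set (Euc m)) (x : Euc m) : Euc m := WithLp.toLp 2 (fun i => c1 (lev Z x) (x i))

/-- `v` lies in the closed cell of `w`. -/
def Sub (Z : Set (Euc m)) (v w : Euc m) : Prop := ∀ i, cl1 (lev Z w) (w i) (v i)

def eqc (k : ℤ) (x y : Euc m) : Prop :=
  ∀ i, ⌊(2:ℝ)^k * y i⌋ = ⌊(2:ℝ)^k * x i⌋ ∧ ⌈(2:ℝ)^k * y i⌉ = ⌈(2:ℝ)^k * x i⌉

def Vtx (Z : Set (Euc m)) (v : Euc m) : Prop := v ∉ Z ∧ ctr Z v = v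

lemma two_mul_c1 (k : ℤ) (a : ℝ) : (2:ℝ)^k * c1 k a
    = (((⌊(2:ℝ)^k * a⌋ : ℤ) : ℝ) + ((⌈(2:ℝ)^k * a⌉ : ℤ) : ℝ)) / 2 := by
  have hp : (2:ℝ)^k ≠ 0 := by positivity
  rw [c1, zpow_neg]
  field_simp

lemma c1_floor_ceil (k : ℤ) (a : ℝ) : ⌊(2:ℝ)^k * c1 k a⌋ = ⌊(2:ℝ)^k * a⌋ ∧
    ⌈(2:ℝ)^k * c1 k a⌉ = ⌈(2:ℝ)^k * a⌉ := by
  have a1 := Int.floor_le ((2:ℝ)^k * a)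
  have a2 := Int.le_ceil ((2:ℝ)^k * a)
  apply floor_ceil_eq (l := 1/2) (by norm_num) <;> rw [two_mul_c1] <;> linarith

lemma dist_le_of_coord {x y : Euc m} {r : ℝ} (hr : 0 ≤ r) (h : ∀ i, |x i - y i| ≤ r) :
    dist x y ≤ Real.sqrt m * r := by
  rw [EuclideanSpace.dist_eq]
  have : Real.sqrt m * r = Real.sqrt (m * r^2) := by
    rw [Real.sqrt_mul (by positivity), Real.sqrt_sq hr]
  rw [this]
  apply Real.sqrt_le_sqrt
  calc ∑ i, dist (x i) (y i)^2 ≤ ∑ i : Fin m, r^2 := by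
        apply Finset.sum_le_sum
        intro i _
        rw [Real.dist_eq]
        gcongr
        exact h i
    _ = m * r^2 := by simp

lemma coord_le_dist (x y : Euc m) (i : Fin m) : |x i - y i| ≤ dist x y := by
  rw [dist_eq_norm]
  exact PiLp.norm_apply_le (x - y) i

lemma near_dist {k : ℤ} {x p : Euc m} (h : ∀ i, near1 k (x i) (p i)) :
    dist x p ≤ Real.sqrt m * (2:ℝ)^(-k) :=
  dist_le_of_coord (by positivity) fun i => near1_dist (h i)

lemma sqrt_pos (hm : 1 ≤ m) : 0 < Real.sqrt m := Real.sqrt_pos.2 (by exact_mod_cast hm)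

lemma G_mono {Z : Set (Euc m)} {k n : ℤ} (h : k ≤ n) {x : Euc m} (hx : G Z k x) : G Z n x := by
  intro p hp z hz
  refine le_trans ?_ (hx p (fun i => near1_coarse h (hp i)) z hz)
  gcongr
  norm_num

lemma G_notMem (hm : 1 ≤ m) {Z : Set (Euc m)} {k : ℤ} {x p : Euc m} (hx : G Z k x)
    (hp : ∀ i, near1 k (x i) (p i)) : p ∉ Z := by
  intro h
  have := hx p hp p h
  rw [dist_self] at this
  have h2 : 0 < Real.sqrt m * (2:ℝ)^(-k) := mul_pos (sqrt_pos hm) (by positivity)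
  linarith

lemma lev_spec (hm : 1 ≤ m) {Z : Set (Euc m)} (hZ : IsClosed Z) (hne : Z.Nonempty) {x : Euc m}
    (hx : x ∉ Z) (k : ℤ) : G Z k x ↔ lev Z x ≤ k := by
  have hs := sqrt_pos hm
  have hbdd : BddBelow {k | G Z k x} := by
    obtain ⟨z, hz⟩ := hne
    obtain ⟨N, hN⟩ := pow_unbounded_of_one_lt (dist x z / Real.sqrt m) (one_lt_two (α := ℝ))
    refine ⟨-N, fun k hk => ?_⟩
    have := hk x (fun i => near1_refl _ _) z hz
    rw [mul_comm, ← le_div_iff₀ hs] at this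
    have h2 := this.trans_lt hN
    rw [← zpow_natCast] at h2
    have := (zpow_lt_zpow_iff_right₀ (one_lt_two (α := ℝ))).1 h2
    omega
  have hnon : {k | G Z k x}.Nonempty := by
    have hd := (hZ.notMem_iff_infDist_pos hne).1 hx
    obtain ⟨N, hN⟩ := pow_unbounded_of_one_lt (2 * Real.sqrt m / infDist x Z) (one_lt_two (α := ℝ))
    refine ⟨N, fun p hp z hz => ?_⟩
    have h1 := near_dist hp
    have h2 := infDist_le_dist_of_mem (x := x) hz
    have h3 := dist_triangle x p z
    rw [div_lt_iff₀ hd, ← div_lt_iff₀' (by positivity)] at hN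
    rw [zpow_neg, zpow_natCast, ← div_eq_mul_inv] at h1 ⊢
    have : 2 * Real.sqrt m / 2 ^ N = 2 * (Real.sqrt m / 2 ^ N) := by ring
    linarith
  have hmem : G Z (lev Z x) x := Int.csInf_mem hnon hbdd
  exact ⟨fun h => csInf_le hbdd h, fun h => G_mono h hmem⟩

section
variable {Z : Set (Euc m)} (hm : 1 ≤ m)
  (H : ∀ x : Euc m, x ∉ Z → ∀ k, G Z k x ↔ lev Z x ≤ k)

lemma Sub_refl (x : Euc m) : Sub Z x x := fun _ => cl1_refl _ _

include H in
lemma G_lev {x : Euc m} (hx : x ∉ Z) : G Z (lev Z x) x := (H x hx _).2 le_rfl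

include hm H in
lemma Sub_notMem {x y : Euc m} (hx : x ∉ Z) (h : Sub Z y x) : y ∉ Z :=
  G_notMem hm (G_lev H hx) fun i => near1_of_cl1 (h i)

include hm H in
lemma Sub_lev {x y : Euc m} (hx : x ∉ Z) (h : Sub Z y x) : lev Z x ≤ lev Z y := by
  have hy := Sub_notMem hm H hx h
  by_contra hc
  push Not at hc
  apply hc.not_ge
  rw [← H x hx]
  intro p hp
  exact G_lev H hy p fun i => cl1_near hc.le (h i) (hp i)

include hm H in
lemma Sub_trans {u v w : Euc m} (hw : w ∉ Z) (h1 : Sub Z u v) (h2 : Sub Z v w) : Sub Z u w :=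
  fun i => cl1_trans (Sub_lev hm H hw h2) (h2 i) (h1 i)

lemma eqc_cl {k : ℤ} {x y : Euc m} (h : eqc k x y) (i : Fin m) :
    cl1 k (x i) (y i) ∧ cl1 k (y i) (x i) := by
  obtain ⟨h1, h2⟩ := h i
  refine ⟨⟨?_, ?_⟩, ⟨?_, ?_⟩⟩
  · rw [← h1]; exact Int.floor_le _
  · rw [← h2]; exact Int.le_ceil _
  · rw [h1]; exact Int.floor_le _
  · rw [h2]; exact Int.le_ceil _

include hm H in
lemma eqc_lev {x y : Euc m} (hx : x ∉ Z) (h : eqc (lev Z x) x y) :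
    y ∉ Z ∧ lev Z y = lev Z x ∧ ctr Z y = ctr Z x := by
  have hs : Sub Z y x := fun i => (eqc_cl h i).1
  have hy := Sub_notMem hm H hx hs
  have hl : lev Z y = lev Z x := by
    apply le_antisymm _ (Sub_lev hm H hx hs)
    rw [← H y hy]
    intro p hp
    exact G_lev H hx p fun i => cl1_near le_rfl (eqc_cl h i).2 (hp i)
  refine ⟨hy, hl, ?_⟩
  unfold ctr
  congr 1
  ext i
  rw [hl, c1, c1, (h i).1, (h i).2]

lemma eqc_ctr (x : Euc m) : eqc (lev Z x) x (ctr Z x) := fun _ => c1_floor_ceil _ _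

include hm H in
lemma ctr_vtx {x : Euc m} (hx : x ∉ Z) : Vtx Z (ctr Z x) := by
  obtain ⟨h1, _, h3⟩ := eqc_lev hm H hx (eqc_ctr x)
  exact ⟨h1, h3⟩

include hm H in
lemma Sub_ctr {x y : Euc m} (hx : x ∉ Z) : Sub Z y (ctr Z x) ↔ Sub Z y x := by
  obtain ⟨_, h2, _⟩ := eqc_lev hm H hx (eqc_ctr x)
  unfold Sub cl1
  rw [h2]
  apply forall_congr'
  intro i
  rw [(eqc_ctr (Z := Z) x i).1, (eqc_ctr (Z := Z) x i).2]

include hm H in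
lemma ctr_Sub {x y : Euc m} (hx : x ∉ Z) (h : Sub Z x y) (hy : y ∉ Z) : Sub Z (ctr Z x) y :=
  Sub_trans hm H hy (fun i => (eqc_cl (eqc_ctr x) i).1) h

include hm H in
lemma Sub_antisymm {v w : Euc m} (hv : Vtx Z v) (hw : Vtx Z w) (h1 : Sub Z v w) (h2 : Sub Z w v) :
    v = w := by
  have hl : lev Z v = lev Z w :=
    le_antisymm (Sub_lev hm H hv.1 h2) (Sub_lev hm H hw.1 h1)
  have : eqc (lev Z w) w v := by
    intro i
    have a := h1 i
    have b := h2 i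
    rw [hl] at b
    exact ⟨le_antisymm (cl1_floor b) (cl1_floor a), le_antisymm (cl1_ceil a) (cl1_ceil b)⟩
  have := (eqc_lev hm H hw.1 this).2.2
  rw [hv.2, hw.2] at this
  exact this

include hm H in
lemma Sub_lev_le {v w : Euc m} (hw : w ∉ Z) (h : Sub Z v w) : lev Z v ≤ lev Z w + 1 := by
  rw [← H v (Sub_notMem hm H hw h)]
  intro p hp z hz
  have h1 := G_lev H hw v (fun i => near1_of_cl1 (h i)) z hz
  have h2 := near_dist hp
  have h3 := dist_triangle v p z
  have h4 : (2:ℝ)^(-lev Z w) = 2 * (2:ℝ)^(-(lev Z w + 1)) := by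
    rw [← zpow_one_add₀ two_ne_zero]; congr 1; ring
  rw [h4] at h1
  linarith

lemma Sub_dist {u v w : Euc m} (h1 : Sub Z u w) (h2 : Sub Z v w) :
    dist u v ≤ Real.sqrt m * (2:ℝ)^(-lev Z w) := by
  apply near_dist
  intro i
  exact cl1_near le_rfl (h1 i) (near1_of_cl1 (h2 i))

lemma Sub_convex (w : Euc m) : Convex ℝ {v | Sub Z v w} := by
  intro u hu v hv a b ha hb hab i
  obtain ⟨h1, h2⟩ := hu i
  obtain ⟨h3, h4⟩ := hv i
  have e : (2:ℝ)^(lev Z w) * (a • u + b • v) i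
      = a * ((2:ℝ)^(lev Z w) * u i) + b * ((2:ℝ)^(lev Z w) * v i) := by
    simp; ring
  have hb' : b = 1 - a := by linarith
  unfold cl1
  rw [e]
  constructor
  · have := add_le_add (mul_le_mul_of_nonneg_left h1 ha) (mul_le_mul_of_nonneg_left h3 hb)
    rw [← add_mul, hab, one_mul] at this
    exact this
  · have := add_le_add (mul_le_mul_of_nonneg_left h2 ha) (mul_le_mul_of_nonneg_left h4 hb)
    rw [← add_mul, hab, one_mul] at this
    exact this

include hm H in
lemma top_eq {S : Finset (Euc m)} {w : Euc m → ℝ} {T : Euc m} (hw : ∀ v ∈ S, 0 ≤ w v)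
    (hw1 : ∑ v ∈ S, w v = 1) (hT : T ∈ S) (hTw : 0 < w T) (hTV : Vtx Z T)
    (hS : ∀ v ∈ S, w v ≠ 0 → Sub Z v T) : ctr Z (∑ v ∈ S, w v • v) = T := by
  conv_rhs => rw [← hTV.2]
  refine (eqc_lev hm H hTV.1 ?_).2.2
  intro i
  set n := lev Z T
  have hx : (2:ℝ)^n * (∑ v ∈ S, w v • v) i = ∑ v ∈ S, w v * ((2:ℝ)^n * v i) := by
    simp [Finset.mul_sum]
    apply Finset.sum_congr rfl
    intros; ring
  have key : ∀ f : ℝ → ℝ, (∀ v ∈ S, Sub Z v T → 0 ≤ f ((2:ℝ)^n * v i)) →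
      w T * f ((2:ℝ)^n * T i) ≤ ∑ v ∈ S, w v * f ((2:ℝ)^n * v i) := by
    intro f hf
    apply Finset.single_le_sum (f := fun v => w v * f ((2:ℝ)^n * v i)) _ hT
    intro v hv
    by_cases h0 : w v = 0
    · simp [h0]
    · exact mul_nonneg (hw v hv) (hf v hv (hS v hv h0))
  apply floor_ceil_eq hTw
  · have := key (fun t => t - ⌊(2:ℝ)^n * T i⌋) (fun v hv h => sub_nonneg.2 (h i).1)
    rw [hx]
    simp only [mul_sub, Finset.sum_sub_distrib, ← Finset.sum_mul, hw1] at this ⊢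
    linarith
  · have := key (fun t => ⌈(2:ℝ)^n * T i⌉ - t) (fun v hv h => sub_nonneg.2 (h i).2)
    rw [hx]
    simp only [mul_sub, Finset.sum_sub_distrib, ← Finset.sum_mul, hw1] at this ⊢
    linarith

include hm H in
lemma exists_top {s : Finset (Euc m)} (hs : s.Nonempty) (hV : ∀ v ∈ s, Vtx Z v)
    (hc : ∀ u ∈ s, ∀ v ∈ s, Sub Z u v ∨ Sub Z v u) : ∃ T ∈ s, ∀ v ∈ s, Sub Z v T := by
  induction hs using Finset.Nonempty.cons_induction with
  | singleton a => exact ⟨a, by simp, by simp [Sub_refl]⟩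
  | cons a s ha hs ih =>
    obtain ⟨T, hT, h⟩ := ih (fun v hv => hV v (by simp [hv]))
      (fun u hu v hv => hc u (by simp [hu]) v (by simp [hv]))
    rcases hc a (by simp) T (by simp [hT]) with h1 | h1
    · refine ⟨T, by simp [hT], ?_⟩
      intro v hv
      rcases Finset.mem_cons.1 hv with rfl | hv
      · exact h1
      · exact h v hv
    · refine ⟨a, by simp, ?_⟩
      intro v hv
      rcases Finset.mem_cons.1 hv with rfl | hv
      · exact Sub_refl _
      · exact Sub_trans hm H (hV a (by simp)).1 (h v hv) h1

end

end Whit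
namespace Whit

variable {m : ℕ} {Z : Set (Euc m)}

def IsCh (Z : Set (Euc m)) (s : Set (Euc m)) : Prop :=
  (∀ v ∈ s, Vtx Z v) ∧ ∀ u ∈ s, ∀ v ∈ s, Sub Z u v ∨ Sub Z v u

lemma IsCh.mono {s t : Set (Euc m)} (h : IsCh Z t) (hst : s ⊆ t) : IsCh Z s :=
  ⟨fun v hv => h.1 v (hst hv), fun u hu v hv => h.2 u (hst hu) v (hst hv)⟩

variable (hm : 1 ≤ m) (H : ∀ x : Euc m, x ∉ Z → ∀ k, G Z k x ↔ lev Z x ≤ k)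

include hm H in
lemma exists_top_w {S : Finset (Euc m)} {w : Euc m → ℝ} (hw : ∀ v ∈ S, 0 ≤ w v)
    (hc : IsCh Z {v | v ∈ S ∧ w v ≠ 0}) (hpos : 0 < ∑ v ∈ S, w v) :
    ∃ T ∈ S, 0 < w T ∧ ctr Z ((∑ v ∈ S, w v)⁻¹ • ∑ v ∈ S, w v • v) = T := by
  classical
  have hne : (S.filter (fun v => w v ≠ 0)).Nonempty := by
    by_contra hcon
    rw [Finset.not_nonempty_iff_eq_empty, Finset.filter_eq_empty_iff] at hcon
    have : ∑ v ∈ S, w v = 0 := Finset.sum_eq_zero fun v hv => by simpa using hcon hv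
    linarith
  obtain ⟨T, hT, hTop⟩ := exists_top hm H hne (fun v hv => hc.1 v (by simpa using hv))
    (fun u hu v hv => hc.2 u (by simpa using hu) v (by simpa using hv))
  rw [Finset.mem_filter] at hT
  have hTp : 0 < w T := lt_of_le_of_ne (hw T hT.1) (Ne.symm hT.2)
  refine ⟨T, hT.1, hTp, ?_⟩
  have := top_eq hm H (S := S) (w := fun v => (∑ v ∈ S, w v)⁻¹ * w v) (T := T)
    (fun v hv => mul_nonneg (by positivity) (hw v hv))
    (by rw [← Finset.mul_sum]; exact inv_mul_cancel₀ hpos.ne') hT.1 (by positivity)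
    (hc.1 T hT) (fun v hv h => hTop v (by
      rw [Finset.mem_filter]; exact ⟨hv, fun h0 => h (by simp [h0])⟩))
  rw [← this, Finset.smul_sum]
  simp only [mul_smul]

include hm H in
lemma uniq (N : ℕ) : ∀ {S : Finset (Euc m)} {w w' : Euc m → ℝ},
    (S.filter (fun v => w v ≠ 0)).card + (S.filter (fun v => w' v ≠ 0)).card ≤ N →
    (∀ v ∈ S, 0 ≤ w v) → (∀ v ∈ S, 0 ≤ w' v) →
    IsCh Z {v | v ∈ S ∧ w v ≠ 0} → IsCh Z {v | v ∈ S ∧ w' v ≠ 0} →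
    ∑ v ∈ S, w v = ∑ v ∈ S, w' v → ∑ v ∈ S, w v • v = ∑ v ∈ S, w' v • v →
    ∀ v ∈ S, w v = w' v := by
  classical
  induction N with
  | zero =>
    intro S w w' hN _ _ _ _ _ _ v hv
    have h1 : S.filter (fun v => w v ≠ 0) = ∅ := Finset.card_eq_zero.1 (by omega)
    have h2 : S.filter (fun v => w' v ≠ 0) = ∅ := Finset.card_eq_zero.1 (by omega)
    rw [Finset.filter_eq_empty_iff] at h1 h2
    have a := h1 hv
    have b := h2 hv
    push Not at a b
    rw [a, b]
  | succ N ih =>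
    -- reduction to `w T ≤ w' T`
    have main : ∀ {S : Finset (Euc m)} {w w' : Euc m → ℝ} {T : Euc m},
      (S.filter (fun v => w v ≠ 0)).card + (S.filter (fun v => w' v ≠ 0)).card ≤ N + 1 →
      (∀ v ∈ S, 0 ≤ w v) → (∀ v ∈ S, 0 ≤ w' v) →
      IsCh Z {v | v ∈ S ∧ w v ≠ 0} → IsCh Z {v | v ∈ S ∧ w' v ≠ 0} →
      ∑ v ∈ S, w v = ∑ v ∈ S, w' v → ∑ v ∈ S, w v • v = ∑ v ∈ S, w' v • v →
      T ∈ S → 0 < w T → w T ≤ w' T → ∀ v ∈ S, w v = w' v := by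
      intro S w w' T hN hw hw' hc hc' hs he hT hTw hle
      have hsub : ∀ v, (fun v => w v - if v = T then w T else 0) v ≠ 0 → w v ≠ 0 := by
        intro v hv
        by_cases h : v = T
        · simp [h] at hv
        · simpa [h] using hv
      have hsub' : ∀ v, (fun v => w' v - if v = T then w T else 0) v ≠ 0 → w' v ≠ 0 := by
        intro v hv
        by_cases h : v = T
        · rw [h]; exact (hTw.trans_le hle).ne'
        · simpa [h] using hv
      have := ih (S := S) (w := fun v => w v - if v = T then w T else 0)
        (w' := fun v => w' v - if v = T then w T else 0) ?_ ?_ ?_ ?_ ?_ ?_ ?_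
      · intro v hv
        have := this v hv
        simpa using this
      · have h1 : (S.filter (fun v => (w v - if v = T then w T else 0) ≠ 0)).card
            < (S.filter (fun v => w v ≠ 0)).card := by
          apply Finset.card_lt_card
          rw [Finset.ssubset_iff_of_subset (Finset.monotone_filter_right _ (fun v _ => hsub v))]
          exact ⟨T, by simp [hT, hTw.ne'], by simp⟩
        have h2 : (S.filter (fun v => (w' v - if v = T then w T else 0) ≠ 0)).card
            ≤ (S.filter (fun v => w' v ≠ 0)).card :=
          Finset.card_le_card (Finset.monotone_filter_right _ (fun v _ => hsub' v))
        omega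
      · intro v hv
        by_cases h : v = T
        · simp [h]
        · simpa [h] using hw v hv
      · intro v hv
        by_cases h : v = T
        · simpa [h] using hle
        · simpa [h] using hw' v hv
      · exact hc.mono fun v hv => ⟨hv.1, hsub v hv.2⟩
      · exact hc'.mono fun v hv => ⟨hv.1, hsub' v hv.2⟩
      · simp only [Finset.sum_sub_distrib, hs]
      · simp only [sub_smul, Finset.sum_sub_distrib, he]
    intro S w w' hN hw hw' hc hc' hs he v hv
    rcases (Finset.sum_nonneg hw).eq_or_lt with h0 | hpos
    · have h0' := h0.trans hs
      rw [(Finset.sum_eq_zero_iff_of_nonneg hw).1 h0.symm v hv,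
        (Finset.sum_eq_zero_iff_of_nonneg hw').1 h0'.symm v hv]
    · obtain ⟨T, hT, hTw, hTe⟩ := exists_top_w hm H hw hc hpos
      obtain ⟨T', hT', hTw', hTe'⟩ := exists_top_w hm H hw' hc' (hs ▸ hpos)
      rw [hs, he, hTe'] at hTe
      subst hTe
      rcases le_total (w T') (w' T') with h | h
      · exact main hN hw hw' hc hc' hs he hT hTw h v hv
      · exact (main (by omega) hw' hw hc' hc hs.symm he.symm hT hTw' h v hv).symm

include hm H in
lemma ch_indep {s : Finset (Euc m)} (hs : IsCh Z s) :
    AffineIndependent ℝ ((↑) : s → Euc m) := by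
  classical
  rw [affineIndependent_iff]
  intro t w h0 h1 e he
  set S : Finset (Euc m) := t.map (Function.Embedding.subtype _) with hS
  set W : Euc m → ℝ := fun v => if h : v ∈ s then w ⟨v, h⟩ else 0 with hW
  have hWe : ∀ e : s, W e = w e := fun e => by simp [hW]
  have hSs : ∀ v ∈ S, v ∈ s := by
    intro v hv
    simp only [hS, Finset.mem_map] at hv
    obtain ⟨a, _, rfl⟩ := hv
    exact a.2
  have := uniq hm H _ (S := S) (w := fun v => max (W v) 0) (w' := fun v => max (-W v) 0) le_rfl
    (fun v _ => le_max_right _ _) (fun v _ => le_max_right _ _)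
    (hs.mono fun v hv => hSs v hv.1) (hs.mono fun v hv => hSs v hv.1) ?_ ?_ e.1
    (by simp [hS, he])
  · have h2 : W e = 0 := by
      rcases le_total (W e.1) 0 with h | h
      · rw [max_eq_right h, max_eq_left (by linarith)] at this; linarith
      · rw [max_eq_left h, max_eq_right (by linarith)] at this; linarith
    rw [← hWe, h2]
  · rw [← sub_eq_zero, ← Finset.sum_sub_distrib]
    have : ∀ v, max (W v) 0 - max (-W v) 0 = W v := fun v => max_zero_sub_max_neg_zero_eq_self _
    simp only [this, hS, Finset.sum_map, Function.Embedding.coe_subtype, hWe]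
    exact h0
  · rw [← sub_eq_zero, ← Finset.sum_sub_distrib]
    have : ∀ v, max (W v) 0 - max (-W v) 0 = W v := fun v => max_zero_sub_max_neg_zero_eq_self _
    simp only [← sub_smul, this, hS, Finset.sum_map, Function.Embedding.coe_subtype, hWe]
    exact h1

include hm H in
lemma ch_inter {s t : Finset (Euc m)} (hs : IsCh Z s) (ht : IsCh Z t) :
    convexHull ℝ (s : Set (Euc m)) ∩ convexHull ℝ (t : Set (Euc m)) ⊆
      convexHull ℝ ((s : Set (Euc m)) ∩ (t : Set (Euc m))) := by
  classical
  rintro x ⟨hxs, hxt⟩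
  obtain ⟨a, ha0, ha1, hax⟩ := Finset.mem_convexHull'.1 hxs
  obtain ⟨b, hb0, hb1, hbx⟩ := Finset.mem_convexHull'.1 hxt
  have e1 : ∀ {s : Finset (Euc m)} {a : Euc m → ℝ} (S : Finset (Euc m)), s ⊆ S →
      ∑ v ∈ S, (if v ∈ s then a v else 0) = ∑ v ∈ s, a v := by
    intro s a S h
    rw [Finset.sum_ite_mem, Finset.inter_eq_right.2 h]
  have e2 : ∀ {s : Finset (Euc m)} {a : Euc m → ℝ} (S : Finset (Euc m)), s ⊆ S →
      ∑ v ∈ S, (if v ∈ s then a v else 0) • v = ∑ v ∈ s, a v • v := by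
    intro s a S h
    simp only [ite_smul, zero_smul]
    rw [Finset.sum_ite_mem, Finset.inter_eq_right.2 h]
  have hss : s ⊆ s ∪ t := Finset.subset_union_left
  have hts : t ⊆ s ∪ t := Finset.subset_union_right
  have key := uniq hm H _ (S := s ∪ t) (w := fun v => if v ∈ s then a v else 0)
    (w' := fun v => if v ∈ t then b v else 0) le_rfl
    (fun v _ => by split_ifs with h <;> [exact ha0 v h; exact le_rfl])
    (fun v _ => by split_ifs with h <;> [exact hb0 v h; exact le_rfl])
    (hs.mono fun v hv => by by_contra h; exact hv.2 (if_neg h))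
    (ht.mono fun v hv => by by_contra h; exact hv.2 (if_neg h))
    (by rw [e1 _ hss, e1 _ hts, ha1, hb1]) (by rw [e2 _ hss, e2 _ hts, hax, hbx])
  have hz : ∀ v ∈ s, v ∉ s ∩ t → a v = 0 := by
    intro v hv hvn
    have := key v (hss hv)
    simp only [hv, if_true] at this
    rw [this, if_neg]
    intro h; exact hvn (Finset.mem_inter.2 ⟨hv, h⟩)
  rw [← Finset.coe_inter, Finset.mem_convexHull']
  refine ⟨a, fun v hv => ha0 v (Finset.mem_inter.1 hv).1, ?_, ?_⟩
  · rw [← ha1]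
    exact Finset.sum_subset Finset.inter_subset_left hz
  · rw [← hax]
    exact Finset.sum_subset Finset.inter_subset_left fun v hv h => by rw [hz v hv h, zero_smul]

/-- The triangulation. -/
def cplx : Geometry.SimplicialComplex ℝ (Euc m) where
  faces := {s | s.Nonempty ∧ IsCh Z s}
  isRelLowerSet_faces := by
    intro s hs
    refine ⟨hs.1, fun t hts ht => ⟨ht, hs.2.mono (by exact_mod_cast hts)⟩⟩
  indep := fun hs => ch_indep hm H hs.2
  inter_subset_convexHull := fun hs ht => ch_inter hm H hs.2 ht.2

end Whit
namespace Whit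

lemma act1_iff {k : ℤ} {a : ℝ} : act1 k a ↔ ⌊(2:ℝ)^k * a⌋ ≠ ⌈(2:ℝ)^k * a⌉ := by
  constructor
  · intro h he
    apply h ⌊(2:ℝ)^k * a⌋
    apply le_antisymm _ (Int.floor_le _)
    rw [he]; exact Int.le_ceil _
  · intro h j hj
    apply h; rw [hj]; simp

lemma act1_ceil {k : ℤ} {a : ℝ} (h : act1 k a) :
    ((⌈(2:ℝ)^k * a⌉ : ℤ) : ℝ) = ⌊(2:ℝ)^k * a⌋ + 1 := by
  have h1 := Int.ceil_le_floor_add_one ((2:ℝ)^k * a)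
  have h2 := Int.floor_le_ceil ((2:ℝ)^k * a)
  have h3 := act1_iff.1 h
  have : ⌈(2:ℝ)^k * a⌉ = ⌊(2:ℝ)^k * a⌋ + 1 := by omega
  rw [this]; push_cast; rfl

lemma cl1_inact {k : ℤ} {a b : ℝ} (h : ¬ act1 k a) : cl1 k a b ↔ b = a := by
  constructor
  · intro hab
    unfold act1 at h; push Not at h
    obtain ⟨j, hj⟩ := h
    unfold cl1 at hab
    rw [hj] at hab
    simp only [Int.floor_intCast, Int.ceil_intCast] at hab
    have hp : (2:ℝ)^k ≠ 0 := by positivity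
    exact mul_left_cancel₀ hp (by rw [hj]; exact le_antisymm hab.2 hab.1)
  · rintro rfl; exact cl1_refl _ _

lemma cl1_act {k : ℤ} {a b : ℝ} (h : cl1 k a b) (hb : act1 k b) : act1 k a := by
  by_contra ha
  rw [cl1_inact ha] at h
  rw [h] at hb
  exact ha hb

lemma cl1_center {k : ℤ} {a b : ℝ} (ha : act1 k a) (hc : c1 k a = a) :
    cl1 k a b ↔ |(2:ℝ)^k * (b - a)| ≤ 1/2 := by
  have h1 := two_mul_c1 k a
  rw [hc] at h1
  have h2 := act1_ceil ha
  unfold cl1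
  rw [abs_le]
  constructor
  · rintro ⟨u, v⟩; constructor <;> linarith
  · rintro ⟨u, v⟩; constructor <;> linarith

lemma center_bdry {k : ℤ} {a b : ℝ} (ha : act1 k a) (hc : c1 k a = a)
    (h : |(2:ℝ)^k * (b - a)| = 1/2) : ¬ act1 k b := by
  have h1 := two_mul_c1 k a
  rw [hc] at h1
  have h2 := act1_ceil ha
  unfold act1; push Not
  rcases (abs_eq (by norm_num)).1 h with h | h
  · exact ⟨⌈(2:ℝ)^k * a⌉, by linarith⟩
  · exact ⟨⌊(2:ℝ)^k * a⌋, by linarith⟩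

lemma perturb1 {n : ℤ} {a s : ℝ} (ha : ¬ act1 n a) (hs : s = 1 ∨ s = -1) :
    cl1 n (a + s / 2 * (2:ℝ)^(-n)) a ∧ act1 n (a + s / 2 * (2:ℝ)^(-n)) := by
  unfold act1 at ha; push Not at ha
  obtain ⟨j, hj⟩ := ha
  have hp : (2:ℝ)^n ≠ 0 := by positivity
  have e : (2:ℝ)^n * (a + s / 2 * (2:ℝ)^(-n)) = j + s / 2 := by
    rw [mul_add, hj, zpow_neg]; field_simp
  unfold cl1 act1
  rw [e, hj]
  rcases hs with rfl | rfl
  · have hf : ⌊(j:ℝ) + 1/2⌋ = j := by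
      rw [Int.floor_eq_iff]; constructor <;> linarith
    refine ⟨⟨by rw [hf], ?_⟩, ?_⟩
    · exact le_trans (by linarith) (Int.le_ceil _)
    · intro i hi
      have h1 : (j:ℝ) < i := by linarith
      have h2 : (i:ℝ) < j + 1 := by linarith
      have h1' : j < i := by exact_mod_cast h1
      have h2' : i < j + 1 := by exact_mod_cast h2
      omega
  · have hf : ⌈(j:ℝ) + -1/2⌉ = j := by
      rw [Int.ceil_eq_iff]; constructor <;> linarith
    refine ⟨⟨?_, by rw [hf]⟩, ?_⟩
    · exact le_trans (Int.floor_le _) (by linarith)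
    · intro i hi
      have h1 : (j:ℝ) - 1 < i := by linarith
      have h2 : (i:ℝ) < j := by linarith
      have h1' : j - 1 < i := by exact_mod_cast h1
      have h2' : i < j := by exact_mod_cast h2
      omega

lemma choose_sign {n n' : ℤ} (h : n ≤ n') {a b : ℝ} (hab : cl1 n a b) (ha : act1 n a)
    (hb : ¬ act1 n' b) : ∃ s : ℝ, (s = 1 ∨ s = -1) ∧ cl1 n a (b + s / 2 * (2:ℝ)^(-n')) := by
  unfold act1 at hb; push Not at hb
  obtain ⟨j, hj⟩ := hb
  have hp : (2:ℝ)^n' ≠ 0 := by positivity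
  obtain ⟨M, hM, e⟩ := split h
  have hM' : (0:ℝ) < M := by exact_mod_cast hM
  have hce := act1_ceil ha
  obtain ⟨u, v⟩ := hab
  rw [hce] at v
  set f := ⌊(2:ℝ)^n * a⌋
  have eb : ∀ s : ℝ, (M:ℝ) * ((2:ℝ)^n * (b + s / 2 * (2:ℝ)^(-n'))) = j + s / 2 := by
    intro s
    rw [← mul_assoc, ← e, mul_add, hj, zpow_neg]; field_simp
  have eb' : (M:ℝ) * ((2:ℝ)^n * b) = j := by rw [← mul_assoc, ← e, hj]
  have u' : M * f ≤ j := by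
    have := mul_le_mul_of_nonneg_left u hM'.le
    rw [eb'] at this; exact_mod_cast this
  have v' : j ≤ M * (f + 1) := by
    have := mul_le_mul_of_nonneg_left v hM'.le
    rw [eb'] at this; exact_mod_cast this
  have fin : ∀ s : ℝ, (M:ℝ) * f ≤ j + s/2 → j + s/2 ≤ (M:ℝ) * (f+1) →
      cl1 n a (b + s / 2 * (2:ℝ)^(-n')) := by
    intro s h1 h2
    rw [← eb] at h1 h2
    refine ⟨le_of_mul_le_mul_left h1 hM', ?_⟩
    rw [hce]; exact le_of_mul_le_mul_left h2 hM'
  rcases v'.lt_or_eq with hlt | heq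
  · refine ⟨1, Or.inl rfl, fin 1 ?_ ?_⟩
    · have : (M:ℝ) * f ≤ j := by exact_mod_cast u'
      linarith
    · have : j + 1 ≤ M * (f+1) := hlt
      have : (j:ℝ) + 1 ≤ M * (f+1) := by exact_mod_cast this
      linarith
  · refine ⟨-1, Or.inr rfl, fin (-1) ?_ ?_⟩
    · have h1 : M * f + 1 ≤ j := by rw [heq, mul_add, mul_one]; omega
      have : (M:ℝ) * f + 1 ≤ j := by exact_mod_cast h1
      linarith
    · have : (j:ℝ) = M * (f+1) := by exact_mod_cast heq
      linarith

variable {m : ℕ} {Z : Set (Euc m)}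

open Classical in
/-- active coordinates -/
def Ac (Z : Set (Euc m)) (x : Euc m) : Finset (Fin m) :=
  Finset.univ.filter fun i => act1 (lev Z x) (x i)

lemma mem_Ac {x : Euc m} {i : Fin m} : i ∈ Ac Z x ↔ act1 (lev Z x) (x i) := by
  classical
  simp [Ac]

variable (hm : 1 ≤ m) (H : ∀ x : Euc m, x ∉ Z → ∀ k, G Z k x ↔ lev Z x ≤ k)

include hm H in
lemma perturb {p : Euc m} (hp : p ∉ Z) (S : Finset (Fin m)) (hS : Ac Z p ⊆ S) (σ : Fin m → ℝ)
    (hσ : ∀ i, σ i = 1 ∨ σ i = -1) : ∃ z : Euc m, z ∉ Z ∧ Sub Z p z ∧ S ⊆ Ac Z z ∧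
      ∀ i, (z i = p i ∧ (i ∈ S → i ∈ Ac Z p)) ∨
        (i ∈ S ∧ i ∉ Ac Z p ∧ z i = p i + σ i / 2 * (2:ℝ)^(-lev Z p)) := by
  classical
  set z : Euc m := WithLp.toLp 2 fun i =>
    if i ∈ S ∧ i ∉ Ac Z p then p i + σ i / 2 * (2:ℝ)^(-lev Z p) else p i with hz
  have hzi : ∀ i, (z i = p i ∧ (i ∈ S → i ∈ Ac Z p)) ∨
        (i ∈ S ∧ i ∉ Ac Z p ∧ z i = p i + σ i / 2 * (2:ℝ)^(-lev Z p)) := by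
    intro i
    by_cases h : i ∈ S ∧ i ∉ Ac Z p
    · right
      refine ⟨h.1, h.2, ?_⟩
      simp only [hz]; rw [if_pos h]
    · left
      refine ⟨?_, fun h1 => by by_contra h2; exact h ⟨h1, h2⟩⟩
      simp only [hz]; rw [if_neg h]
  have hcl : ∀ i, cl1 (lev Z p) (z i) (p i) := by
    intro i
    rcases hzi i with h | ⟨_, h2, h3⟩
    · rw [h.1]; exact cl1_refl _ _
    · rw [h3]; rw [mem_Ac] at h2; exact (perturb1 h2 (hσ i)).1
  have hG : G Z (lev Z p) z := fun q hq =>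
    G_lev H hp q fun i => cl1_near le_rfl (hcl i) (hq i)
  have hzZ : z ∉ Z := G_notMem hm hG fun i => near1_refl _ _
  have hl : lev Z z ≤ lev Z p := (H z hzZ _).1 hG
  refine ⟨z, hzZ, fun i => cl1_coarse hl (hcl i), ?_, hzi⟩
  intro i hi
  rw [mem_Ac]
  apply act1_coarse hl
  rcases hzi i with h | ⟨_, h2, h3⟩
  · rw [h.1]; exact mem_Ac.1 (h.2 hi)
  · rw [h3]; rw [mem_Ac] at h2; exact (perturb1 h2 (hσ i)).2

include hm H in
lemma step {x y : Euc m} (hx : x ∉ Z) (hyx : Sub Z y x) {j : Fin m} 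
    (hj' : ¬ act1 (lev Z x) (y j)) :
    ∃ z : Euc m, z ∉ Z ∧ Sub Z y z ∧ Sub Z z x ∧ Ac Z z = (Ac Z x).erase j := by
  classical
  have hy := Sub_notMem hm H hx hyx
  have hl := Sub_lev hm H hx hyx
  have hσ : ∀ i, ∃ s : ℝ, (s = 1 ∨ s = -1) ∧ (i ∈ Ac Z x → i ∉ Ac Z y →
      cl1 (lev Z x) (x i) (y i + s / 2 * (2:ℝ)^(-lev Z y))) := by
    intro i
    by_cases h1 : i ∈ Ac Z x
    · by_cases h2 : i ∈ Ac Z y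
      · exact ⟨1, Or.inl rfl, fun _ h => absurd h2 h⟩
      · obtain ⟨s, hs, hs'⟩ := choose_sign hl (hyx i) (mem_Ac.1 h1) (fun h => h2 (mem_Ac.2 h))
        exact ⟨s, hs, fun _ _ => hs'⟩
    · exact ⟨1, Or.inl rfl, fun h => absurd h h1⟩
  choose σ hσ1 hσ2 using hσ
  obtain ⟨z, hz, hyz, hSz, hzi⟩ := perturb hm H hy ((Ac Z x).erase j) (by
    intro i hi
    rw [mem_Ac] at hi
    have := act1_coarse hl hi
    rw [Finset.mem_erase, mem_Ac]
    exact ⟨fun h => hj' (h ▸ this), cl1_act (hyx i) this⟩) σ hσ1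
  have hzx : Sub Z z x := by
    intro i
    rcases hzi i with h | ⟨h1, h2, h3⟩
    · rw [h.1]; exact hyx i
    · rw [h3]; exact hσ2 i (Finset.mem_of_mem_erase h1) h2
  refine ⟨z, hz, hyz, hzx, Finset.Subset.antisymm ?_ hSz⟩
  intro i hi
  by_contra hc
  have hl' := Sub_lev hm H hx hzx
  have ha := act1_coarse hl' (mem_Ac.1 hi)
  rcases hzi i with h | ⟨h1, _, _⟩
  · rw [h.1] at ha
    apply hc
    rw [Finset.mem_erase, mem_Ac]
    exact ⟨fun h => hj' (h ▸ ha), cl1_act (hyx i) ha⟩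
  · exact hc h1

lemma Vtx.coord {x : Euc m} (hx : Vtx Z x) (i : Fin m) : c1 (lev Z x) (x i) = x i := by
  conv_rhs => rw [← hx.2]
  rfl

lemma ray {x p : Euc m} (hx : Vtx Z x) (hA : (Ac Z x).Nonempty) (hp : Sub Z p x) :
    ∃ y : Euc m, ∃ j ∈ Ac Z x, Sub Z y x ∧ ¬ act1 (lev Z x) (y j) ∧ p ∈ segment ℝ x y := by
  classical
  set n := lev Z x with hn
  have hpow : (0:ℝ) < 2^n := by positivity
  obtain ⟨j, hj, hmax⟩ := Finset.exists_max_image (Ac Z x) (fun i => |(2:ℝ)^n * (p i - x i)|) hA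
  by_cases h0 : |(2:ℝ)^n * (p j - x j)| = 0
  · have hpx : p = x := by
      ext i
      by_cases hi : i ∈ Ac Z x
      · have h1 := hmax i hi
        rw [h0] at h1
        have h2 : (2:ℝ)^n * (p i - x i) = 0 := abs_nonpos_iff.1 h1
        rcases mul_eq_zero.1 h2 with h | h
        · exact absurd h hpow.ne'
        · linarith
      · exact (cl1_inact (fun h => hi (mem_Ac.2 h))).1 (hp i)
    have e : ∀ i, (WithLp.toLp 2 (Function.update x j (x j + 1/2 * (2:ℝ)^(-n))) : Euc m) i =
        if i = j then x j + 1/2 * (2:ℝ)^(-n) else x i := by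
      intro i
      simp [Function.update_apply]
    have ej : |(2:ℝ)^n * ((x j + 1/2 * (2:ℝ)^(-n)) - x j)| = 1/2 := by
      rw [add_sub_cancel_left, zpow_neg, mul_comm (1/2 : ℝ), mul_inv_cancel_left₀ hpow.ne']
      norm_num
    refine ⟨WithLp.toLp 2 (Function.update x j (x j + 1/2 * (2:ℝ)^(-n))), j, hj, ?_, ?_, ?_⟩
    · intro i
      rw [e]
      split_ifs with h
      · subst h
        rw [cl1_center (mem_Ac.1 hj) (hx.coord i)]
        exact ej.le
      · exact cl1_refl _ _
    · rw [e, if_pos rfl]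
      exact center_bdry (mem_Ac.1 hj) (hx.coord j) ej
    · rw [hpx]; exact left_mem_segment _ _ _
  · set r := |(2:ℝ)^n * (p j - x j)| with hr
    have hr0 : 0 < r := lt_of_le_of_ne (abs_nonneg _) (Ne.symm h0)
    have hr1 : r ≤ 1/2 := (cl1_center (mem_Ac.1 hj) (hx.coord j)).1 (hp j)
    have e : ∀ i, (x + (1/(2*r)) • (p - x)) i = x i + 1/(2*r) * (p i - x i) := by
      intro i; simp
    have e2 : ∀ i, |(2:ℝ)^n * ((x + (1/(2*r)) • (p - x)) i - x i)|
        = 1/(2*r) * |(2:ℝ)^n * (p i - x i)| := by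
      intro i
      rw [e, add_sub_cancel_left, mul_left_comm, abs_mul, abs_of_pos (by positivity)]
    refine ⟨x + (1/(2*r)) • (p - x), j, hj, ?_, ?_, ?_⟩
    · intro i
      by_cases hi : i ∈ Ac Z x
      · rw [cl1_center (mem_Ac.1 hi) (hx.coord i), e2]
        calc _ ≤ 1/(2*r) * r := by gcongr; exact hmax i hi
          _ = 1/2 := by field_simp
      · have := (cl1_inact (fun h => hi (mem_Ac.2 h))).1 (hp i)
        rw [e, this, sub_self, mul_zero, add_zero]
        exact cl1_refl _ _
    · apply center_bdry (mem_Ac.1 hj) (hx.coord j)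
      rw [e2, ← hr]; field_simp
    · rw [segment_eq_image']
      refine ⟨2*r, ⟨by positivity, by linarith⟩, ?_⟩
      simp only [add_sub_cancel_left, smul_smul]
      rw [mul_one_div_cancel (by positivity), one_smul, add_sub_cancel]

include hm H in
lemma Ac_ctr {x : Euc m} (hx : x ∉ Z) : Ac Z (ctr Z x) = Ac Z x := by
  ext i
  obtain ⟨_, h2, _⟩ := eqc_lev hm H hx (eqc_ctr x)
  rw [mem_Ac, mem_Ac, act1_iff, act1_iff, h2, (eqc_ctr (Z := Z) x i).1, (eqc_ctr (Z := Z) x i).2]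

include hm H in
lemma cover (d : ℕ) : ∀ {x p : Euc m}, Vtx Z x → (Ac Z x).card = d → Sub Z p x →
    ∃ s : Finset (Euc m), IsCh Z s ∧ s.card = d + 1 ∧ (∀ v ∈ s, Sub Z v x) ∧
      p ∈ convexHull ℝ (s : Set (Euc m)) := by
  classical
  induction d with
  | zero =>
    intro x p hx hd hp
    have hpx : p = x := by
      ext i
      refine (cl1_inact (fun h => ?_)).1 (hp i)
      have := mem_Ac.2 h
      rw [Finset.card_eq_zero.1 hd] at this
      simp at this
    refine ⟨{x}, ⟨?_, ?_⟩, by simp, ?_, ?_⟩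
    · simpa using hx
    · simp [Sub_refl]
    · simp [Sub_refl]
    · simp [hpx]
  | succ d ih =>
    intro x p hx hd hp
    obtain ⟨y, j, hj, hyx, hyj, hpy⟩ := ray hx (Finset.card_pos.1 (by omega)) hp
    obtain ⟨z, hz, hyz, hzx, hzA⟩ := step hm H hx.1 hyx hyj
    have hcA : (Ac Z (ctr Z z)).card = d := by
      rw [Ac_ctr hm H hz, hzA, Finset.card_erase_of_mem hj]; omega
    obtain ⟨s, hs, hsc, hsz, hys⟩ := ih (ctr_vtx hm H hz) hcA ((Sub_ctr hm H hz).2 hyz)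
    have hczx := ctr_Sub hm H hz hzx hx.1
    have hsx : ∀ v ∈ s, Sub Z v x := fun v hv => Sub_trans hm H hx.1 (hsz v hv) hczx
    have hxs : x ∉ s := by
      intro h
      have := Sub_antisymm hm H (ctr_vtx hm H hz) hx hczx (hsz x h)
      rw [this] at hcA
      omega
    refine ⟨insert x s, ⟨?_, ?_⟩, by rw [Finset.card_insert_of_notMem hxs, hsc], ?_, ?_⟩
    · intro v hv
      rcases Finset.mem_insert.1 (Finset.mem_coe.1 hv) with rfl | hv
      · exact hx
      · exact hs.1 v hv
    · intro u hu v hv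
      rcases Finset.mem_insert.1 (Finset.mem_coe.1 hu) with hu' | hu' <;>
        rcases Finset.mem_insert.1 (Finset.mem_coe.1 hv) with hv' | hv'
      · rw [hu', hv']; exact Or.inl (Sub_refl _)
      · rw [hu']; exact Or.inr (hsx v hv')
      · rw [hv']; exact Or.inl (hsx u hu')
      · exact hs.2 u hu' v hv'
    · intro v hv
      rcases Finset.mem_insert.1 hv with rfl | hv
      · exact Sub_refl _
      · exact hsx v hv
    · have hsub : convexHull ℝ (s : Set (Euc m)) ⊆ convexHull ℝ ((insert x s : Finset (Euc m)) : Set (Euc m)) :=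
        convexHull_mono (by simp)
      exact (convex_convexHull ℝ _).segment_subset (subset_convexHull ℝ _ (by simp)) (hsub hys) hpy

include hm H in
lemma cover_all {p : Euc m} (hp : p ∉ Z) :
    ∃ s : Finset (Euc m), IsCh Z s ∧ s.card = m + 1 ∧ p ∈ convexHull ℝ (s : Set (Euc m)) := by
  obtain ⟨z, hz, hpz, hA, _⟩ := perturb hm H hp Finset.univ (Finset.subset_univ _) (fun _ => 1)
    (fun _ => Or.inl rfl)
  have hA' : Ac Z z = Finset.univ := Finset.univ_subset_iff.1 hA
  obtain ⟨s, h1, h2, _, h4⟩ := cover hm H m (ctr_vtx hm H hz)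
    (by rw [Ac_ctr hm H hz, hA']; simp) ((Sub_ctr hm H hz).2 hpz)
  exact ⟨s, h1, h2, h4⟩

end Whit
namespace Whit

variable {m : ℕ}

lemma centroid_notMem {Ω T : Finset (Euc m)} (hi : AffineIndependent ℝ ((↑) : Ω → Euc m))
    (hT : T ⊂ Ω) : Ω.centroid ℝ id ∉ affineSpan ℝ (T : Set (Euc m)) := by
  classical
  intro hmem
  obtain ⟨hsub, v, hv, hvT⟩ := (Finset.ssubset_iff_exists_cons_subset.1 hT |> fun _ =>
    (⟨hT.1, Finset.exists_of_ssubset hT⟩ : T ⊆ Ω ∧ ∃ v ∈ Ω, v ∉ T))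
  have hne : Ω.Nonempty := ⟨v, hv⟩
  have hne' : (Finset.univ : Finset Ω).Nonempty := ⟨⟨v, hv⟩, Finset.mem_univ _⟩
  rw [← Finset.centroid_univ, Finset.centroid_def] at hmem
  have himg : (T : Set (Euc m)) = ((↑) : Ω → Euc m) '' {a | (a : Euc m) ∈ T} := by
    ext u
    simp only [Finset.mem_coe, Set.mem_image, Set.mem_setOf_eq, Subtype.exists, exists_and_left,
      exists_prop, exists_eq_right_right]
    exact ⟨fun h => ⟨h, hsub h⟩, fun h => h.1⟩
  rw [himg] at hmem
  have h0 := hi.eq_zero_of_affineCombination_mem_affineSpan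
    (Finset.sum_centroidWeights_eq_one_of_nonempty ℝ _ hne') hmem
    (i := ⟨v, hv⟩) (Finset.mem_univ _) (by simpa using hvT)
  rw [Finset.centroidWeights_apply] at h0
  simp at h0
  rw [h0] at hne
  simp at hne

def Grid (m : ℕ) : Set (Euc m) := {x | ∀ i, ∃ k : ℤ, k ∈ Set.Icc (-2 : ℤ) 2 ∧ x i = k}

lemma Grid_finite (m : ℕ) : (Grid m).Finite := by
  have : (Set.pi Set.univ fun _ : Fin m => Set.Icc (-2 : ℤ) 2).Finite :=
    Set.Finite.pi' (fun _ => Set.finite_Icc _ _) |>.subset (by intro f hf i; exact hf i (Set.mem_univ _))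
  refine (this.image fun f => (WithLp.toLp 2 fun i => (f i : ℝ) : Euc m)).subset ?_
  intro x hx
  choose f hf using hx
  refine ⟨f, fun i _ => (hf i).1, ?_⟩
  ext i
  simp [(hf i).2]

lemma exists_kappa (m : ℕ) : ∃ κ : ℝ, 0 < κ ∧ ∀ Ω T : Finset (Euc m), (Ω : Set (Euc m)) ⊆ Grid m →
    AffineIndependent ℝ ((↑) : Ω → Euc m) → T ⊂ Ω → T.Nonempty →
    κ ≤ infDist (Ω.centroid ℝ id) (affineSpan ℝ (T : Set (Euc m)) : Set (Euc m)) := by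
  classical
  set P : Set (Finset (Euc m) × Finset (Euc m)) := {q | (q.1 : Set (Euc m)) ⊆ Grid m ∧
    AffineIndependent ℝ ((↑) : q.1 → Euc m) ∧ q.2 ⊂ q.1 ∧ q.2.Nonempty} with hP
  have hfin : P.Finite := by
    set g := (Grid_finite m).toFinset
    refine (Finset.finite_toSet (g.powerset ×ˢ g.powerset)).subset ?_
    rintro ⟨Ω, T⟩ ⟨h1, _, h3, _⟩
    have : Ω ⊆ g := by intro v hv; simp [g]; exact h1 hv
    simp only [Finset.coe_product, Set.mem_prod, Finset.mem_coe, Finset.mem_powerset]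
    exact ⟨this, h3.1.trans this⟩
  rcases P.eq_empty_or_nonempty with he | hne
  · refine ⟨1, one_pos, fun Ω T h1 h2 h3 h4 => ?_⟩
    have : (Ω, T) ∈ P := ⟨h1, h2, h3, h4⟩
    rw [he] at this; exact absurd this (Set.notMem_empty _)
  · obtain ⟨q, hq, hmin⟩ := Set.exists_min_image P (fun q => infDist (q.1.centroid ℝ id)
      (affineSpan ℝ (q.2 : Set (Euc m)) : Set (Euc m))) hfin hne
    refine ⟨_, ?_, fun Ω T h1 h2 h3 h4 => hmin (Ω, T) ⟨h1, h2, h3, h4⟩⟩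
    refine (IsClosed.notMem_iff_infDist_pos (AffineSubspace.closed_of_finiteDimensional _) ?_).1 ?_
    · obtain ⟨v, hv⟩ := hq.2.2.2
      exact ⟨v, mem_affineSpan ℝ hv⟩
    · exact centroid_notMem hq.2.1 hq.2.2.1

/-- translation and scaling -/
def sc (a : ℝ) (c : Euc m) : Euc m →ᵃ[ℝ] Euc m where
  toFun v := a • (v - c)
  linear := a • LinearMap.id
  map_vadd' := by
    intro p v
    simp [smul_sub, smul_add]
    abel

lemma kappa_scale {κ : ℝ} (hκ : ∀ Ω T : Finset (Euc m), (Ω : Set (Euc m)) ⊆ Grid m →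
    AffineIndependent ℝ ((↑) : Ω → Euc m) → T ⊂ Ω → T.Nonempty →
    κ ≤ infDist (Ω.centroid ℝ id) (affineSpan ℝ (T : Set (Euc m)) : Set (Euc m)))
    {a : ℝ} (ha : 0 < a) (c : Euc m) {ω t : Finset (Euc m)}
    (hg : ∀ v ∈ ω, a • (v - c) ∈ Grid m) (hi : AffineIndependent ℝ ((↑) : ω → Euc m))
    (ht : t ⊂ ω) (htn : t.Nonempty) :
    a⁻¹ * κ ≤ infDist (ω.centroid ℝ id) (affineSpan ℝ (t : Set (Euc m)) : Set (Euc m)) := by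
  classical
  have hap : ∀ v, sc a c v = a • (v - c) := fun v => rfl
  have hinj : Function.Injective (sc a c) := by
    intro u v h
    rw [hap, hap] at h
    have := smul_right_injective _ ha.ne' h
    simpa using this
  set e : Euc m ↪ Euc m := ⟨sc a c, hinj⟩ with he
  have hωn : ω.Nonempty := htn.mono ht.1
  have key := hκ (ω.map e) (t.map e) ?_ ?_ (Finset.map_ssubset_map.2 ht) (htn.map)
  · rw [le_infDist (by obtain ⟨v, hv⟩ := htn; exact ⟨v, mem_affineSpan ℝ hv⟩)]
    intro y hy
    have hc : (ω.map e).centroid ℝ id = sc a c (ω.centroid ℝ id) := by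
      rw [Finset.centroid_map, Finset.centroid_def, Finset.centroid_def,
        Finset.map_affineCombination _ _ _ (Finset.sum_centroidWeights_eq_one_of_nonempty ℝ _ hωn)]
      rfl
    have hy' : sc a c y ∈ (affineSpan ℝ ((t.map e : Finset (Euc m)) : Set (Euc m)) : Set (Euc m)) := by
      rw [Finset.coe_map]
      change sc a c y ∈ affineSpan ℝ (sc a c '' (t : Set (Euc m)))
      rw [← AffineSubspace.map_span]
      exact AffineSubspace.mem_map_of_mem _ hy
    have h1 := key.trans (infDist_le_dist_of_mem hy')
    rw [hc, hap, hap, dist_smul₀, dist_sub_right, Real.norm_of_nonneg ha.le] at h1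
    rw [inv_mul_le_iff₀ ha]
    exact h1
  · intro v hv
    rw [Finset.coe_map] at hv
    obtain ⟨u, hu, rfl⟩ := hv
    exact hg u hu
  · have h1 := (hi.map' (sc a c) hinj).range
    have h2 : Set.range ((sc a c) ∘ ((↑) : ω → Euc m)) = ((ω.map e : Finset (Euc m)) : Set (Euc m)) := by
      rw [Finset.coe_map, Set.range_comp]
      simp [he]
    rw [h2] at h1
    exact h1

lemma beta_bounds (hm : 1 ≤ m) {σ : Finset (Euc m)} (hσ : σ.card = m + 1) {κ D : ℝ} (hκ : 0 ≤ κ)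
    (hb : ∀ ω ⊆ σ, 2 ≤ ω.card → ∀ t ⊆ ω, t.card = ω.card - 1 →
      κ ≤ infDist (ω.centroid ℝ id) (affineSpan ℝ (t : Set (Euc m)) : Set (Euc m)) ∧
      infDist (ω.centroid ℝ id) (affineSpan ℝ (t : Set (Euc m)) : Set (Euc m)) ≤ D) :
    κ ≤ betaLow m σ ∧ betaLow m σ ≤ betaHigh m σ ∧ betaHigh m σ ≤ D := by
  have hex : ∀ ω : Finset (Euc m), ∃ t ⊆ ω, t.card = ω.card - 1 := fun ω =>
    Finset.exists_subset_card_eq (by omega)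
  have h1 : ∀ ω ⊆ σ, 2 ≤ ω.card → κ ≤ faceBetaMin m ω ∧ faceBetaMin m ω ≤ faceBetaMax m ω ∧
      faceBetaMax m ω ≤ D := by
    intro ω hω hc
    obtain ⟨t, ht, htc⟩ := hex ω
    refine ⟨?_, ?_, ?_⟩
    · refine le_csInf ⟨_, t, ht, htc, rfl⟩ ?_
      rintro d ⟨t, ht, htc, rfl⟩
      exact (hb ω hω hc t ht htc).1
    · refine le_trans (csInf_le ⟨κ, ?_⟩ ⟨t, ht, htc, rfl⟩) (le_csSup ⟨D, ?_⟩ ⟨t, ht, htc, rfl⟩)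
      · rintro d ⟨t, ht, htc, rfl⟩
        exact (hb ω hω hc t ht htc).1
      · rintro d ⟨t, ht, htc, rfl⟩
        exact (hb ω hω hc t ht htc).2
    · refine csSup_le ⟨_, t, ht, htc, rfl⟩ ?_
      rintro d ⟨t, ht, htc, rfl⟩
      exact (hb ω hω hc t ht htc).2
  have hσ2 : 2 ≤ σ.card := by omega
  refine ⟨?_, ?_, ?_⟩
  · refine le_csInf ⟨_, σ, subset_rfl, hσ2, rfl⟩ ?_
    rintro b ⟨ω, hω, hc, rfl⟩
    exact (h1 ω hω hc).1
  · refine le_trans (csInf_le ⟨κ, ?_⟩ ⟨σ, subset_rfl, hσ2, rfl⟩)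
      ((h1 σ subset_rfl hσ2).2.1.trans (le_csSup ⟨D, ?_⟩ ⟨σ, subset_rfl, hσ2, rfl⟩))
    · rintro b ⟨ω, hω, hc, rfl⟩
      exact (h1 ω hω hc).1
    · rintro b ⟨ω, hω, hc, rfl⟩
      exact (h1 ω hω hc).2.2
  · refine csSup_le ⟨_, σ, subset_rfl, hσ2, rfl⟩ ?_
    rintro b ⟨ω, hω, hc, rfl⟩
    exact (h1 ω hω hc).2.2

lemma infDist_le_diam {σ ω t : Finset (Euc m)} (hω : ω ⊆ σ) (hc : 2 ≤ ω.card) (ht : t ⊆ ω)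
    (htc : t.card = ω.card - 1) :
    infDist (ω.centroid ℝ id) (affineSpan ℝ (t : Set (Euc m)) : Set (Euc m)) ≤ simpDiam m σ := by
  obtain ⟨v, hv⟩ : t.Nonempty := Finset.card_pos.1 (by omega)
  refine (infDist_le_dist_of_mem (mem_affineSpan ℝ hv)).trans ?_
  apply dist_le_diam_of_mem
  · exact isBounded_convexHull.2 σ.finite_toSet.isBounded
  · have : ω.Nonempty := ⟨v, ht hv⟩
    refine convexHull_mono (by exact_mod_cast hω) (Finset.centroid_mem_convexHull (R := ℝ) ω this)
  · exact subset_convexHull ℝ _ (hω (ht hv))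

end Whit
namespace Whit
variable {m : ℕ} {Z : Set (Euc m)} 

lemma coord_half {T v : Euc m} (hT : Vtx Z T) (h : Sub Z v T) (i : Fin m) :
    |(2:ℝ)^(lev Z T) * (v i - T i)| ≤ 1/2 := by
  by_cases ha : act1 (lev Z T) (T i)
  · exact (cl1_center ha (Vtx.coord hT i)).1 (h i)
  · have := (cl1_inact ha).1 (h i)
    rw [this]; norm_num

lemma coord_int {v : Euc m} (hv : Vtx Z v) {n : ℤ} (hn : lev Z v ≤ n + 1) (i : Fin m) :
    ∃ k : ℤ, (2:ℝ)^(n+2) * v i = k := by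
  obtain ⟨M, hM, e⟩ := split hn
  have h := two_mul_c1 (lev Z v) (v i)
  rw [Vtx.coord hv i] at h
  refine ⟨M * (⌊(2:ℝ)^(lev Z v) * v i⌋ + ⌈(2:ℝ)^(lev Z v) * v i⌉), ?_⟩
  have : (2:ℝ)^(n+2) = 2 * 2^(n+1) := by
    rw [show n + 2 = (n+1) + 1 by ring, zpow_add_one₀ two_ne_zero]; ring
  rw [this, e]
  push_cast
  have h' : 2 * ((2:ℝ)^(lev Z v) * v i) = ⌊(2:ℝ)^(lev Z v) * v i⌋ + ⌈(2:ℝ)^(lev Z v) * v i⌉ := by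
    linarith
  rw [← h']; ring

lemma grid_of_sub (hm : 1 ≤ m) (H : ∀ x : Euc m, x ∉ Z → ∀ k, G Z k x ↔ lev Z x ≤ k)
    {T v : Euc m} (hT : Vtx Z T) (hv : Vtx Z v) (h : Sub Z v T) :
    (2:ℝ)^(lev Z T + 2) • (v - T) ∈ Grid m := by
  intro i
  obtain ⟨a, ha⟩ := coord_int hv (Sub_lev_le hm H hT.1 h) i
  obtain ⟨b, hb⟩ := coord_int hT (n := lev Z T) (by omega) i
  have hc := coord_half hT h i
  have e : (2:ℝ)^(lev Z T + 2) = 2^(lev Z T) * 4 := by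
    rw [zpow_add₀ two_ne_zero]; norm_num
  have key : ((a - b : ℤ) : ℝ) = 4 * ((2:ℝ)^(lev Z T) * (v i - T i)) := by
    push_cast; rw [← ha, ← hb, e]; ring
  rw [abs_le] at hc
  have h1 : (-2:ℝ) ≤ ((a - b : ℤ) : ℝ) := by rw [key]; linarith
  have h2 : ((a - b : ℤ) : ℝ) ≤ 2 := by rw [key]; linarith
  refine ⟨a - b, ⟨by exact_mod_cast h1, by exact_mod_cast h2⟩, ?_⟩
  push_cast
  rw [← ha, ← hb]
  simp [mul_sub]

lemma dist_lower (hm : 1 ≤ m) (H : ∀ x : Euc m, x ∉ Z → ∀ k, G Z k x ↔ lev Z x ≤ k)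
    {T v : Euc m} (hT : Vtx Z T) (hv : Vtx Z v) (h : Sub Z v T) (hne : v ≠ T) :
    (2:ℝ)^(-lev Z T) / 2 ≤ dist v T := by
  by_contra hlt
  push Not at hlt
  apply hne
  have hp : (0:ℝ) < 2^(lev Z T) := by positivity
  have heq : eqc (lev Z T) T v := by
    intro i
    by_cases ha : act1 (lev Z T) (T i)
    · have h1 := (coord_le_dist v T i).trans_lt hlt
      have h2 : |(2:ℝ)^(lev Z T) * (v i - T i)| < 1/2 := by
        rw [abs_mul, abs_of_pos hp]
        calc _ < (2:ℝ)^(lev Z T) * ((2:ℝ)^(-lev Z T) / 2) := by gcongr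
          _ = 1/2 := by rw [zpow_neg]; field_simp
      have h3 := two_mul_c1 (lev Z T) (T i)
      rw [Vtx.coord hT i] at h3
      have h4 := act1_ceil ha
      rw [abs_lt] at h2
      constructor
      · rw [Int.floor_eq_iff]; constructor <;> linarith
      · rw [Int.ceil_eq_iff]; constructor <;> linarith
    · rw [(cl1_inact ha).1 (h i)]; exact ⟨rfl, rfl⟩
  have := (eqc_lev hm H hT.1 heq).2.2
  rw [hv.2, hT.2] at this
  exact this

lemma main_est (hm : 1 ≤ m) (H : ∀ x : Euc m, x ∉ Z → ∀ k, G Z k x ↔ lev Z x ≤ k)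
    (hZ : Z.Nonempty) {κ : ℝ} (hκ0 : 0 < κ)
    (hκ : ∀ Ω T : Finset (Euc m), (Ω : Set (Euc m)) ⊆ Grid m →
      AffineIndependent ℝ ((↑) : Ω → Euc m) → T ⊂ Ω → T.Nonempty →
      κ ≤ infDist (Ω.centroid ℝ id) (affineSpan ℝ (T : Set (Euc m)) : Set (Euc m)))
    {σ : Finset (Euc m)} (hσ : IsCh Z (σ : Set (Euc m))) (hcard : σ.card = m + 1) :
    simpDiam m σ ≤ setDist m (convexHull ℝ (σ : Set (Euc m))) Z ∧
    setDist m (convexHull ℝ (σ : Set (Euc m))) Z ≤ 12 * Real.sqrt m * simpDiam m σ ∧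
    1/2 < simpDiam m σ / betaHigh m σ ∧
    simpDiam m σ / betaHigh m σ ≤ simpDiam m σ / betaLow m σ ∧
    simpDiam m σ / betaLow m σ < 4 * Real.sqrt m / κ + 1 := by
  have hs := sqrt_pos hm
  obtain ⟨T, hTσ, htop⟩ := exists_top hm H (s := σ) (Finset.card_pos.1 (by omega)) hσ.1 hσ.2
  have hT := hσ.1 T hTσ
  obtain ⟨v, hvσ, hvT⟩ := Finset.exists_mem_ne (by omega : 1 < σ.card) T
  have hlow := dist_lower hm H hT (hσ.1 v hvσ) (htop v hvσ) hvT
  have hsub : ∀ p ∈ convexHull ℝ (σ : Set (Euc m)), Sub Z p T := fun p hp =>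
    convexHull_min (t := {v | Sub Z v T}) (fun v hv => htop v hv) (Sub_convex T) hp
  have hmem : ∀ v ∈ σ, v ∈ convexHull ℝ (σ : Set (Euc m)) := fun v hv => subset_convexHull ℝ _ hv
  set n := lev Z T with hn
  have hpn : (0:ℝ) < 2^(-n) := by positivity
  have hD1 : (2:ℝ)^(-n) / 2 ≤ simpDiam m σ :=
    hlow.trans (dist_le_diam_of_mem (isBounded_convexHull.2 σ.finite_toSet.isBounded)
      (hmem v hvσ) (hmem T hTσ))
  have hD2 : simpDiam m σ ≤ Real.sqrt m * 2^(-n) :=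
    Metric.diam_le_of_forall_dist_le (by positivity) fun x hx y hy =>
      Sub_dist (hsub x hx) (hsub y hy)
  have hDpos : 0 < simpDiam m σ := by linarith
  have hS : Real.sqrt m * 2^(-n) ≤ setDist m (convexHull ℝ (σ : Set (Euc m))) Z := by
    obtain ⟨z, hz⟩ := hZ
    refine le_csInf ⟨_, T, hmem T hTσ, z, hz, rfl⟩ ?_
    rintro d ⟨p, hp, z, hz, rfl⟩
    exact G_lev H hT.1 p (fun i => near1_of_cl1 (hsub p hp i)) z hz
  have hS2 : setDist m (convexHull ℝ (σ : Set (Euc m))) Z ≤ 4 * Real.sqrt m * 2^(-n) := by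
    have hnG : ¬ G Z (n-1) T := by rw [H T hT.1]; omega
    unfold G at hnG
    push Not at hnG
    obtain ⟨p, hp, z, hz, hd⟩ := hnG
    have h1 := near_dist hp
    have h2 := dist_triangle T p z
    have e : (2:ℝ)^(-(n-1)) = 2 * 2^(-n) := by
      rw [show -(n-1) = -n + 1 by ring, zpow_add_one₀ two_ne_zero]; ring
    rw [e] at h1 hd
    have h3 : setDist m (convexHull ℝ (σ : Set (Euc m))) Z ≤ dist T z := by
      refine csInf_le ⟨0, ?_⟩ ⟨T, hmem T hTσ, z, hz, rfl⟩
      rintro d ⟨p, hp, z, hz, rfl⟩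
      exact dist_nonneg
    linarith
  have hB := beta_bounds hm hcard (κ := ((2:ℝ)^(n+2))⁻¹ * κ) (D := simpDiam m σ) (by positivity) (by
    intro ω hω hc t ht htc
    refine ⟨?_, infDist_le_diam hω hc ht htc⟩
    refine kappa_scale hκ (by positivity) T ?_ (ch_indep hm H (hσ.mono (by exact_mod_cast hω))) ?_ ?_
    · intro v hv
      exact grid_of_sub hm H hT (hσ.1 v (hω hv)) (htop v (hω hv))
    · refine ht.ssubset_of_ne ?_
      rintro rfl
      omega
    · exact Finset.card_pos.1 (by omega))
  obtain ⟨b1, b2, b3⟩ := hB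
  have e4 : ((2:ℝ)^(n+2))⁻¹ = 2^(-n) / 4 := by
    rw [zpow_add₀ two_ne_zero, zpow_neg]; norm_num; ring
  rw [e4] at b1
  have hκpos : 0 < (2:ℝ)^(-n) / 4 * κ := by positivity
  have hbl : 0 < betaLow m σ := by linarith
  have hbh : 0 < betaHigh m σ := by linarith
  refine ⟨hD2.trans hS, ?_, ?_, ?_, ?_⟩
  · have : 4 * Real.sqrt m * 2^(-n) ≤ 4 * Real.sqrt m * (2 * simpDiam m σ) := by
      gcongr; linarith
    have : 0 < Real.sqrt m * simpDiam m σ := by positivity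
    linarith
  · rw [lt_div_iff₀ hbh]; linarith
  · gcongr
  · have : simpDiam m σ / betaLow m σ ≤ (Real.sqrt m * 2^(-n)) / ((2:ℝ)^(-n) / 4 * κ) := by
      gcongr
    have e : (Real.sqrt m * 2^(-n)) / ((2:ℝ)^(-n) / 4 * κ) = 4 * Real.sqrt m / κ := by
      field_simp
    linarith

end Whit

/-- **Lemma (Whitney triangulation).**
For every `m ≥ 1` there are `D₁, D₂ > 0` depending only on `m` such that every nonempty
proper closed subset `Z ⊊ ℝ^m` admits an `m`-dimensional simplicial complex `Σ` with
`Σ^{(m)} = ℝ^m ∖ Z` whose `m`-simplices `σ` satisfy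
`diam σ ≤ dist(σ,Z) ≤ 12√m · diam σ` and `D₁ < diam σ / B_σ ≤ diam σ / β_σ < D₂`. -/
theorem whitney_triangulation (m : ℕ) (hm : 1 ≤ m) :
    ∃ D₁ D₂ : ℝ, 0 < D₁ ∧ 0 < D₂ ∧
      ∀ Z : Set (Euc m), IsClosed Z → Z.Nonempty → Z ≠ Set.univ →
        ∃ K : Geometry.SimplicialComplex ℝ (Euc m), WhitneyConclusions m D₁ D₂ Z K := by


  obtain ⟨κ, hκ0, hκ⟩ := Whit.exists_kappa m
  refine ⟨1/2, 4 * Real.sqrt m / κ + 1, by norm_num, by positivity, ?_⟩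
  intro Z hZ hne _
  have H : ∀ x : Euc m, x ∉ Z → ∀ k, Whit.G Z k x ↔ Whit.lev Z x ≤ k :=
    fun x hx k => Whit.lev_spec hm hZ hne hx k
  refine ⟨Whit.cplx hm H, ?_, ?_, ?_⟩
  · intro s hs
    have h1 := (Whit.ch_indep hm H hs.2).card_le_finrank_succ
    have h2 := Submodule.finrank_le (vectorSpan ℝ (Set.range ((↑) : s → Euc m)))
    rw [finrank_euclideanSpace_fin] at h2
    rw [Fintype.card_coe] at h1
    omega
  · ext p
    simp only [skel, Set.mem_iUnion, Set.mem_compl_iff, exists_prop]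
    constructor
    · rintro ⟨s, ⟨hs, hc⟩, hp⟩
      obtain ⟨T, hTs, htop⟩ := Whit.exists_top hm H (s := s) hs.1 hs.2.1 hs.2.2
      have : Whit.Sub Z p T :=
        convexHull_min (t := {v | Whit.Sub Z v T}) (fun v hv => htop v hv) (Whit.Sub_convex T) hp
      exact Whit.Sub_notMem hm H (hs.2.1 T hTs).1 this
    · intro hp
      obtain ⟨s, hs, hc, hps⟩ := Whit.cover_all hm H hp
      exact ⟨s, ⟨⟨Finset.card_pos.1 (by omega), hs⟩, hc⟩, hps⟩
  · intro σ hσ hc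
    exact Whit.main_est hm H hne hκ0 hκ hσ.2 hc

end
end

section
/- For every integer m ≥ 1 there are constants D₁, D₂ > 0 and an integer N ≥ 1, all depending only on m, such that for every nonempty closed set Z ⊊ ℝ^m there exists an m-dimensional simplicial complex Σ in ℝ^m with Σ^{(m)} = ℝ^m ∖ Z satisfying: (i) every m-simplex σ ∈ Σ satisfies diam(σ) ≤ dist(σ,Z) ≤ 12√m·diam(σ) and D₁ < diam(σ)/B_σ ≤ diam(σ)/β_σ < D₂; and (ii) the simplices of Σ fall into at most N equivalence classes, where two simplices are equivalent if one can be obtained from the other by a composition of a rotation, a translation and a homothetic dilation. -/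
open MeasureTheory Metric Set
noncomputable section

/-- Two simplices (given by vertex sets `s`, `t`) are equivalent if one is obtained from
the other by a composition of a rotation, a translation and a homothetic dilation. -/
def SimplexEquiv (m : ℕ) (s t : Finset (Euc m)) : Prop :=
  ∃ (r : ℝ) (R : Euc m ≃ₗᵢ[ℝ] Euc m) (b : Euc m), 0 < r ∧
    LinearMap.det (R.toLinearEquiv : Euc m →ₗ[ℝ] Euc m) = 1 ∧
    (t : Set (Euc m)) = (fun x => r • R x + b) '' (s : Set (Euc m))

def wlo (j : ℤ) (t : ℝ) : ℝ := 2 ^ j * ⌊t / 2 ^ j⌋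
def whi (j : ℤ) (t : ℝ) : ℝ := 2 ^ j * ⌈t / 2 ^ j⌉

lemma wpos (j : ℤ) : (0 : ℝ) < 2 ^ j := by positivity

lemma wlo_le (j : ℤ) (t : ℝ) : wlo j t ≤ t := by
  have h := Int.floor_le (t / 2 ^ j)
  rw [le_div_iff₀ (wpos j)] at h
  unfold wlo; linarith

lemma le_whi (j : ℤ) (t : ℝ) : t ≤ whi j t := by
  have h := Int.le_ceil (t / 2 ^ j)
  rw [div_le_iff₀ (wpos j)] at h
  unfold whi; linarith

lemma whi_eq_or (j : ℤ) (t : ℝ) : whi j t = wlo j t ∨ whi j t = wlo j t + 2 ^ j := by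
  have h1 := Int.ceil_le_floor_add_one (t / 2 ^ j)
  have h2 := Int.floor_le_ceil (t / 2 ^ j)
  have h3 : ⌈t / 2 ^ j⌉ = ⌊t / 2 ^ j⌋ ∨ ⌈t / 2 ^ j⌉ = ⌊t / 2 ^ j⌋ + 1 := by omega
  unfold whi wlo
  rcases h3 with h | h
  · left; rw [h]
  · right; rw [h]; push_cast; ring

lemma wlo_le_whi (j : ℤ) (t : ℝ) : wlo j t ≤ whi j t := (wlo_le j t).trans (le_whi j t)

lemma whi_le (j : ℤ) (t : ℝ) : whi j t ≤ wlo j t + 2 ^ j := by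
  have := wpos j
  rcases whi_eq_or j t with h | h <;> linarith

lemma wpow_dvd {j' j : ℤ} (h : j' ≤ j) : ∃ n : ℤ, 1 ≤ n ∧ (2 : ℝ) ^ j = 2 ^ j' * n := by
  obtain ⟨k, rfl⟩ := Int.le.dest h
  refine ⟨2 ^ k, one_le_pow₀ (by norm_num), ?_⟩
  push_cast
  rw [zpow_add₀ (by norm_num)]; simp

lemma whi_le_int {j : ℤ} {s : ℝ} {n : ℤ} (h : s ≤ 2 ^ j * n) : whi j s ≤ 2 ^ j * n := by
  unfold whi
  refine mul_le_mul_of_nonneg_left ?_ (wpos j).le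
  have : ⌈s / 2 ^ j⌉ ≤ n := by
    rw [Int.ceil_le, div_le_iff₀ (wpos j)]; linarith
  exact_mod_cast this

lemma le_wlo_int {j : ℤ} {s : ℝ} {n : ℤ} (h : 2 ^ j * n ≤ s) : 2 ^ j * n ≤ wlo j s := by
  unfold wlo
  refine mul_le_mul_of_nonneg_left ?_ (wpos j).le
  have : n ≤ ⌊s / 2 ^ j⌋ := by
    rw [Int.le_floor, le_div_iff₀ (wpos j)]; linarith
  exact_mod_cast this

lemma whi_gt_int {j : ℤ} {s : ℝ} {n : ℤ} (h : 2 ^ j * n < s) : 2 ^ j * n + 2 ^ j ≤ whi j s := by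
  by_contra hc
  have h2 : whi j s < 2 ^ j * (n + 1 : ℤ) := by push_cast; linarith
  have h3 : ⌈s / 2 ^ j⌉ < n + 1 := by
    unfold whi at h2
    exact_mod_cast lt_of_mul_lt_mul_left h2 (wpos j).le
  have h4 : ⌈s / 2 ^ j⌉ ≤ n := by omega
  rw [Int.ceil_le, div_le_iff₀ (wpos j)] at h4
  linarith

lemma wlo_lt_int {j : ℤ} {s : ℝ} {n : ℤ} (h : s < 2 ^ j * n) : wlo j s ≤ 2 ^ j * n - 2 ^ j := by
  by_contra hc
  have h2 : 2 ^ j * (n - 1 : ℤ) < wlo j s := by push_cast; linarith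
  have h3 : n - 1 < ⌊s / 2 ^ j⌋ := by
    unfold wlo at h2
    exact_mod_cast lt_of_mul_lt_mul_left h2 (wpos j).le
  have h4 : n ≤ ⌊s / 2 ^ j⌋ := by omega
  rw [Int.le_floor, le_div_iff₀ (wpos j)] at h4
  linarith

lemma whi_int {j' j : ℤ} (h : j' ≤ j) (t : ℝ) : ∃ n : ℤ, whi j t = 2 ^ j' * n := by
  obtain ⟨n, -, hn⟩ := wpow_dvd h
  exact ⟨n * ⌈t / 2 ^ j⌉, by unfold whi; nth_rw 1 [hn]; push_cast; ring⟩

lemma wlo_int {j' j : ℤ} (h : j' ≤ j) (t : ℝ) : ∃ n : ℤ, wlo j t = 2 ^ j' * n := by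
  obtain ⟨n, -, hn⟩ := wpow_dvd h
  exact ⟨n * ⌊t / 2 ^ j⌋, by unfold wlo; nth_rw 1 [hn]; push_cast; ring⟩

lemma whi_mono {j' j : ℤ} (h : j' ≤ j) {s t : ℝ} (hs : s ≤ whi j t) : whi j' s ≤ whi j t := by
  obtain ⟨n, hn⟩ := whi_int h t
  rw [hn] at hs ⊢; exact whi_le_int hs

lemma wlo_mono {j' j : ℤ} (h : j' ≤ j) {s t : ℝ} (hs : wlo j t ≤ s) : wlo j t ≤ wlo j' s := by
  obtain ⟨n, hn⟩ := wlo_int h t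
  rw [hn] at hs ⊢; exact le_wlo_int hs

lemma whi_lt (j : ℤ) (t : ℝ) : whi j t - 2 ^ j < t := by
  have h := Int.ceil_lt_add_one (t / 2 ^ j)
  rw [← sub_lt_iff_lt_add, lt_div_iff₀ (wpos j)] at h
  unfold whi; linarith

lemma lt_wlo (j : ℤ) (t : ℝ) : t < wlo j t + 2 ^ j := by
  have h := Int.lt_floor_add_one (t / 2 ^ j)
  rw [div_lt_iff₀ (wpos j)] at h
  unfold wlo; linarith

lemma wstar_hi {j' j : ℤ} (h : j' ≤ j) (t : ℝ) : whi j t - 2 ^ j ≤ whi j' t - 2 ^ j' := by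
  have h1 := whi_lt j t
  obtain ⟨n, hn⟩ := whi_int h t
  obtain ⟨k, -, hk⟩ := wpow_dvd h
  have h2 : 2 ^ j' * ((n - k : ℤ) : ℝ) = whi j t - 2 ^ j := by rw [hn, hk]; push_cast; ring
  rw [← h2] at h1 ⊢
  linarith [whi_gt_int h1]

lemma wstar_lo {j' j : ℤ} (h : j' ≤ j) (t : ℝ) : wlo j' t + 2 ^ j' ≤ wlo j t + 2 ^ j := by
  have h1 := lt_wlo j t
  obtain ⟨n, hn⟩ := wlo_int h t
  obtain ⟨k, -, hk⟩ := wpow_dvd h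
  have h2 : 2 ^ j' * ((n + k : ℤ) : ℝ) = wlo j t + 2 ^ j := by rw [hn, hk]; push_cast; ring
  rw [← h2] at h1 ⊢
  linarith [wlo_lt_int h1]

lemma w_of_int {j : ℤ} {s : ℝ} {n : ℤ} (h : s = 2 ^ j * n) : wlo j s = s ∧ whi j s = s := by
  constructor
  · exact le_antisymm (wlo_le _ _) (by nth_rw 1 [h]; exact le_wlo_int h.ge)
  · exact le_antisymm (by nth_rw 2 [h]; exact whi_le_int h.le) (le_whi _ _)

lemma w_whi {j' j : ℤ} (h : j' ≤ j) (t : ℝ) :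
    wlo j' (whi j t) = whi j t ∧ whi j' (whi j t) = whi j t := by
  obtain ⟨n, hn⟩ := whi_int h t
  exact w_of_int hn

lemma w_wlo {j' j : ℤ} (h : j' ≤ j) (t : ℝ) :
    wlo j' (wlo j t) = wlo j t ∧ whi j' (wlo j t) = wlo j t := by
  obtain ⟨n, hn⟩ := wlo_int h t
  exact w_of_int hn

/-- interior points of an open interval have the same endpoints -/
lemma w_interior {j : ℤ} {s t : ℝ} (h1 : wlo j t < s) (h2 : s < whi j t) :
    wlo j s = wlo j t ∧ whi j s = whi j t := by
  have a := wlo_mono le_rfl h1.le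
  have b := whi_mono le_rfl h2.le
  have c := whi_eq_or j t
  have d : wlo j s ≤ whi j t - 2 ^ j := by
    obtain ⟨n, hn⟩ := whi_int le_rfl t (j := j)
    rw [hn] at h2 ⊢; exact wlo_lt_int h2
  have e : wlo j t + 2 ^ j ≤ whi j s := by
    obtain ⟨n, hn⟩ := wlo_int le_rfl t (j := j)
    rw [hn] at h1 ⊢; exact whi_gt_int h1
  rcases c with c | c
  · linarith
  · constructor <;> linarith

section aux

variable {m : ℕ}

def wC (j : ℤ) (x y : Euc m) : Prop := ∀ i, wlo j (x i) ≤ y i ∧ y i ≤ whi j (x i)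

def wA (Z : Set (Euc m)) (j : ℤ) (x : Euc m) : Prop :=
  ∀ p : Euc m, (∀ i, whi j (x i) - 2 ^ j ≤ p i ∧ p i ≤ wlo j (x i) + 2 ^ j) →
    ∀ z ∈ Z, Real.sqrt m * 2 ^ j ≤ dist p z

lemma wC_refl (j : ℤ) (x : Euc m) : wC j x x := fun _ => ⟨wlo_le _ _, le_whi _ _⟩

lemma wC_scale {j' j : ℤ} (h : j' ≤ j) {x y : Euc m} (hc : wC j' x y) : wC j x y := fun i =>
  ⟨(wlo_mono h (wlo_le _ _)).trans (hc i).1, (hc i).2.trans (whi_mono h (le_whi _ _))⟩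

lemma wC_trans {j' j : ℤ} (h : j' ≤ j) {x y z : Euc m} (hc : wC j x y) (hd : wC j' y z) :
    wC j x z := fun i =>
  ⟨(wlo_mono h (hc i).1).trans (hd i).1, (hd i).2.trans (whi_mono h (hc i).2)⟩

lemma wA_mono {Z : Set (Euc m)} {j' j : ℤ} (h : j' ≤ j) {x : Euc m} (ha : wA Z j x) :
    wA Z j' x := by
  intro p hp z hz
  refine le_trans ?_ (ha p (fun i => ⟨(wstar_hi h _).trans (hp i).1,
    (hp i).2.trans (wstar_lo h _)⟩) z hz)
  have : (2 : ℝ) ^ j' ≤ 2 ^ j := zpow_le_zpow_right₀ (by norm_num) h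
  gcongr

lemma wA_C {Z : Set (Euc m)} {j : ℤ} {x y : Euc m} (hc : wC j x y) (ha : wA Z j y) :
    wA Z j x := by
  intro p hp z hz
  refine ha p (fun i => ?_) z hz
  have h1 := whi_mono le_rfl (hc i).2
  have h2 := wlo_mono le_rfl (hc i).1
  have := hp i
  constructor <;> linarith

lemma wC_star {j : ℤ} {x y : Euc m} (hc : wC j x y) (i) :
    whi j (x i) - 2 ^ j ≤ y i ∧ y i ≤ wlo j (x i) + 2 ^ j := by
  have := whi_le j (x i)
  have := hc i
  constructor <;> linarith

lemma wdist_le {x y : Euc m} {r : ℝ} (hr : 0 ≤ r) (h : ∀ i, |x i - y i| ≤ r) :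
    dist x y ≤ Real.sqrt m * r := by
  rw [EuclideanSpace.dist_eq]
  calc Real.sqrt (∑ i, dist (x i) (y i) ^ 2) ≤ Real.sqrt (∑ i : Fin m, r ^ 2) := by
        apply Real.sqrt_le_sqrt
        apply Finset.sum_le_sum
        intro i _
        rw [Real.dist_eq]
        have := h i
        have := abs_nonneg (x i - y i)
        gcongr
    _ = Real.sqrt m * r := by
        simp [Real.sqrt_mul (Nat.cast_nonneg m), Real.sqrt_sq hr]

lemma wcoord_le (x y : Euc m) (i : Fin m) : |x i - y i| ≤ dist x y := by
  rw [dist_eq_norm]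
  exact PiLp.norm_apply_le (x - y) i

lemma wA_notMem (hm : 1 ≤ m) {Z : Set (Euc m)} {j : ℤ} {x y : Euc m} (ha : wA Z j x)
    (hc : wC j x y) : y ∉ Z := by
  intro hy
  have h1 := ha y (wC_star hc) y hy
  have h2 : 0 < Real.sqrt m * 2 ^ j := by
    have : (0 : ℝ) < m := by exact_mod_cast hm
    positivity
  rw [dist_self] at h1; linarith

lemma wJ_exists (hm : 1 ≤ m) {Z : Set (Euc m)} (hZ : IsClosed Z) (hne : Z.Nonempty) {x : Euc m}
    (hx : x ∉ Z) : ∃ J : ℤ, wA Z J x ∧ ∀ j, wA Z j x → j ≤ J := by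
  have hm' : (1 : ℝ) ≤ Real.sqrt m := by
    rw [Real.one_le_sqrt]; exact_mod_cast hm
  have hd : 0 < infDist x Z := (hZ.notMem_iff_infDist_pos hne).1 hx
  refine Int.exists_greatest_of_bdd (P := fun j => wA Z j x) ?_ ?_
  · obtain ⟨z, hz⟩ := hne
    obtain ⟨n, hn⟩ := pow_unbounded_of_one_lt (dist x z) (one_lt_two (α := ℝ))
    refine ⟨n, fun j hj => ?_⟩
    have h := hj x (wC_star (wC_refl j x)) z hz
    have h3 : (2 : ℝ) ^ j < 2 ^ (n : ℤ) := by
      rw [zpow_natCast]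
      have := wpos j
      nlinarith
    exact ((zpow_lt_zpow_iff_right₀ (by norm_num)).1 h3).le
  · obtain ⟨n, hn⟩ := exists_pow_lt_of_lt_one (y := (1 / 2 : ℝ))
      (show 0 < infDist x Z / (2 * Real.sqrt m) by positivity) (by norm_num)
    refine ⟨-n, fun p hp z hz => ?_⟩
    have e : (2 : ℝ) ^ (-(n : ℤ)) = (1 / 2) ^ n := by simp [zpow_neg]
    have h1 : dist x p ≤ Real.sqrt m * 2 ^ (-(n : ℤ)) := by
      apply wdist_le (wpos _).le
      intro i
      have a := hp i
      have b := wlo_le (-(n : ℤ)) (x i)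
      have c := le_whi (-(n : ℤ)) (x i)
      rw [abs_le]; constructor <;> linarith
    have h2 := infDist_le_dist_of_mem (x := x) hz
    have h3 := dist_triangle x p z
    rw [lt_div_iff₀ (by positivity)] at hn
    rw [e] at *
    linarith

def WSpec (Z : Set (Euc m)) (J : Euc m → ℤ) : Prop :=
  ∀ x, x ∉ Z → wA Z (J x) x ∧ ∀ j, wA Z j x → j ≤ J x

lemma w_P2 (hm : 1 ≤ m) {Z : Set (Euc m)} {J : Euc m → ℤ} (hJ : WSpec Z J) {x y : Euc m}
    (hx : x ∉ Z) (hc : wC (J x) x y) : y ∉ Z ∧ J y ≤ J x ∧ J x - 1 ≤ J y := by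
  have hy := wA_notMem hm (hJ x hx).1 hc
  refine ⟨hy, ?_, ?_⟩
  · by_contra hlt
    push Not at hlt
    exact absurd ((hJ x hx).2 _ (wA_C (wC_scale hlt.le hc) (hJ y hy).1)) (by omega)
  · apply (hJ y hy).2
    intro p hp z hz
    have h1 := (hJ x hx).1 y (wC_star hc) z hz
    have h2 : dist y p ≤ Real.sqrt m * 2 ^ (J x - 1) := by
      apply wdist_le (wpos _).le
      intro i
      have a := hp i
      have b := wlo_le (J x - 1) (y i)
      have c := le_whi (J x - 1) (y i)
      rw [abs_le]; constructor <;> linarith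
    have h3 := dist_triangle y p z
    have h4 : (2 : ℝ) ^ (J x) = 2 * 2 ^ (J x - 1) := by
      rw [zpow_sub_one₀ (by norm_num)]; ring
    rw [h4] at h1
    linarith

lemma w_P1 (hm : 1 ≤ m) {Z : Set (Euc m)} {J : Euc m → ℤ} (hJ : WSpec Z J) {x y : Euc m}
    (hx : x ∉ Z) (hc : wC (J x) x y) (hc' : wC (J x) y x) : J y = J x := by
  obtain ⟨hy, h1, -⟩ := w_P2 hm hJ hx hc
  exact le_antisymm h1 ((hJ y hy).2 _ (wA_C hc' (hJ x hx).1))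

lemma w_P5 (hm : 1 ≤ m) {Z : Set (Euc m)} {J : Euc m → ℤ} (hJ : WSpec Z J) {y z : Euc m}
    (hy : y ∉ Z) (hc : wC (J y) z y) : z ∉ Z ∧ J y ≤ J z := by
  have h := wA_C hc (hJ y hy).1
  have hz := wA_notMem hm h (wC_refl _ _)
  exact ⟨hz, (hJ z hz).2 _ h⟩

def wV (Z : Set (Euc m)) (J : Euc m → ℤ) (c : Euc m) : Prop :=
  c ∉ Z ∧ ∀ i, c i = (wlo (J c) (c i) + whi (J c) (c i)) / 2

def wFace (Z : Set (Euc m)) (J : Euc m → ℤ) (s : Finset (Euc m)) : Prop :=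
  s.Nonempty ∧ (∀ c ∈ s, wV Z J c) ∧ ∀ c ∈ s, ∀ d ∈ s, wC (J d) d c ∨ wC (J c) c d

lemma wFace.mono {Z : Set (Euc m)} {J : Euc m → ℤ} {s t : Finset (Euc m)} (h : wFace Z J s)
    (hts : t ⊆ s) (ht : t.Nonempty) : wFace Z J t :=
  ⟨ht, fun c hc => h.2.1 c (hts hc), fun c hc d hd => h.2.2 c (hts hc) d (hts hd)⟩

open Classical in
def wI (J : Euc m → ℤ) (x : Euc m) : Finset (Fin m) :=
  Finset.univ.filter (fun i => wlo (J x) (x i) < whi (J x) (x i))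

lemma mem_wI {J : Euc m → ℤ} {x : Euc m} {i : Fin m} :
    i ∈ wI J x ↔ wlo (J x) (x i) < whi (J x) (x i) := by simp [wI]

/-- mutual closure: same floors and ceilings -/
lemma wC_antisymm {j : ℤ} {x y : Euc m} (h : wC j x y) (h' : wC j y x) (i : Fin m) :
    wlo j (x i) = wlo j (y i) ∧ whi j (x i) = whi j (y i) :=
  ⟨le_antisymm (wlo_mono le_rfl (h i).1) (wlo_mono le_rfl (h' i).1),
    le_antisymm (whi_mono le_rfl (h' i).2) (whi_mono le_rfl (h i).2)⟩

lemma w_P4 (hm : 1 ≤ m) {Z : Set (Euc m)} {J : Euc m → ℤ} (hJ : WSpec Z J) {c d : Euc m}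
    (hcV : wV Z J c) (hd : wV Z J d) (hc : wC (J d) d c) (hne : c ≠ d) :
    ∃ i ∈ wI J d, i ∉ wI J c ∧ |c i - d i| = 2 ^ (J d) / 2 ∧ ∀ y, wC (J c) c y → y i = c i := by
  have hle := (w_P2 hm hJ hd.1 hc).2.1
  have key : ∃ i ∈ wI J d, c i = wlo (J d) (d i) ∨ c i = whi (J d) (d i) := by
    by_contra hcon
    push Not at hcon
    apply hne
    have hc' : wC (J d) c d := by
      intro i
      by_cases hi : i ∈ wI J d
      · have h1 := hcon i hi
        have h2 := hc i
        have h3 := w_interior (lt_of_le_of_ne h2.1 (Ne.symm h1.1)) (lt_of_le_of_ne h2.2 h1.2)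
        rw [h3.1, h3.2]
        exact ⟨wlo_le _ _, le_whi _ _⟩
      · rw [mem_wI, not_lt] at hi
        have h2 := hc i
        have h3 := wlo_le (J d) (d i)
        have h4 := le_whi (J d) (d i)
        have : c i = d i := by linarith
        rw [this]; exact ⟨h3, h4⟩
    have hJe := w_P1 hm hJ hd.1 hc hc'
    ext i
    have := wC_antisymm hc hc' i
    rw [hcV.2 i, hd.2 i, hJe, this.1, this.2]
  obtain ⟨i, hi, h⟩ := key
  have hI := mem_wI.1 hi
  have hd2 := hd.2 i
  have hw : whi (J d) (d i) = wlo (J d) (d i) + 2 ^ (J d) := by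
    rcases whi_eq_or (J d) (d i) with h | h
    · linarith
    · exact h
  have hp := wpos (J d)
  have hfix : wlo (J c) (c i) = c i ∧ whi (J c) (c i) = c i := by
    rcases h with h | h
    · rw [h]; exact w_wlo hle _
    · rw [h]; exact w_whi hle _
  refine ⟨i, hi, ?_, ?_, ?_⟩
  · rw [mem_wI, hfix.1, hfix.2]; exact lt_irrefl _
  · rcases h with h | h
    · have : c i - d i = -(2 ^ (J d) / 2) := by linarith
      rw [this, abs_neg, abs_of_pos (by positivity)]
    · have : c i - d i = (2 ^ (J d) / 2) := by linarith
      rw [this, abs_of_pos (by positivity)]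
  · intro y hy
    have := hy i
    rw [hfix.1, hfix.2] at this
    exact le_antisymm this.2 this.1

lemma wI_lt (hm : 1 ≤ m) {Z : Set (Euc m)} {J : Euc m → ℤ} (hJ : WSpec Z J) {c d : Euc m}
    (hcV : wV Z J c) (hd : wV Z J d) (hc : wC (J d) d c) (hne : c ≠ d) :
    (wI J c).card < (wI J d).card := by
  have hle := (w_P2 hm hJ hd.1 hc).2.1
  apply Finset.card_lt_card
  rw [Finset.ssubset_iff_of_subset]
  · obtain ⟨i, h1, h2, -⟩ := w_P4 hm hJ hcV hd hc hne
    exact ⟨i, h1, h2⟩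
  · intro i hi
    rw [mem_wI] at hi ⊢
    have h1 := hc i
    have h2 := wlo_mono hle h1.1
    have h3 := whi_mono hle h1.2
    linarith

lemma wFace.top (hm : 1 ≤ m) {Z : Set (Euc m)} {J : Euc m → ℤ} (hJ : WSpec Z J)
    {s : Finset (Euc m)} (h : wFace Z J s) : ∃ d ∈ s, ∀ c ∈ s, wC (J d) d c := by
  obtain ⟨d, hd, hmax⟩ := Finset.exists_max_image s (fun c => (wI J c).card) h.1
  refine ⟨d, hd, fun c hc => ?_⟩
  by_cases hcd : c = d
  · subst hcd; exact wC_refl _ _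
  · rcases h.2.2 c hc d hd with h1 | h1
    · exact h1
    · have := wI_lt hm hJ (h.2.1 d hd) (h.2.1 c hc) h1 (Ne.symm hcd)
      have := hmax c hc
      omega

open Classical in
lemma wFace.facet (hm : 1 ≤ m) {Z : Set (Euc m)} {J : Euc m → ℤ} (hJ : WSpec Z J)
    {s : Finset (Euc m)} (h : wFace Z J s) {d : Euc m} (hd : d ∈ s) (hC : ∀ c ∈ s, wC (J d) d c)
    (hne : (s.erase d).Nonempty) :
    ∃ (i : Fin m) (a : ℝ), |a - d i| = 2 ^ (J d) / 2 ∧ ∀ c ∈ s.erase d, c i = a := by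
  have h' := h.mono (Finset.erase_subset d s) hne
  obtain ⟨e, he, heC⟩ := h'.top hm hJ
  have he' := Finset.mem_erase.1 he
  obtain ⟨i, -, -, h1, h2⟩ := w_P4 hm hJ (h.2.1 e he'.2) (h.2.1 d hd) (hC e he'.2) he'.1
  exact ⟨i, e i, h1, fun c hc => h2 c (heC c hc)⟩

open Classical in
lemma wFace.indep (hm : 1 ≤ m) {Z : Set (Euc m)} {J : Euc m → ℤ} (hJ : WSpec Z J) :
    ∀ (n : ℕ) {s : Finset (Euc m)}, s.card = n → wFace Z J s →
      AffineIndependent ℝ ((↑) : s → Euc m) := by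
  intro n
  induction n with
  | zero => intro s hs h; exact absurd (Finset.card_eq_zero.1 hs) h.1.ne_empty
  | succ n ih =>
    intro s hs h
    obtain ⟨d, hd, hC⟩ := h.top hm hJ
    by_cases hne : (s.erase d).Nonempty
    · have h' := ih (by rw [Finset.card_erase_of_mem hd, hs]; rfl) (h.mono (Finset.erase_subset d s) hne)
      obtain ⟨i, a, ha, hia⟩ := h.facet hm hJ hd hC hne
      refine AffineIndependent.affineIndependent_of_notMem_span (i := ⟨d, hd⟩) ?_ ?_
      · let f : {y : s // y ≠ ⟨d, hd⟩} ↪ (s.erase d : Finset (Euc m)) :=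
          ⟨fun y => ⟨y.1.1, Finset.mem_erase.2 ⟨fun h => y.2 (Subtype.ext h), y.1.2⟩⟩, by
            intro y z hyz
            have := congrArg Subtype.val hyz
            exact Subtype.ext (Subtype.ext this)⟩
        exact h'.comp_embedding f
      · intro hmem
        let Q : AffineSubspace ℝ (Euc m) :=
          { carrier := {x | x i = a}
            smul_vsub_vadd_mem' := by
              intro c p1 p2 p3 h1 h2 h3
              simp only [Set.mem_ofPred_eq] at *
              simp [h1, h2, h3] }
        have hQ : affineSpan ℝ ((fun x : s => (x : Euc m)) '' {x | x ≠ ⟨d, hd⟩}) ≤ Q := by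
          rw [affineSpan_le]
          rintro _ ⟨x, hx, rfl⟩
          exact hia x.1 (Finset.mem_erase.2 ⟨fun h => hx (Subtype.ext h), x.2⟩)
        have h3 : d i = a := hQ hmem
        rw [h3, sub_self, abs_zero] at ha
        have := wpos (J d)
        linarith
    · have : Subsingleton s := by
        rw [Finset.not_nonempty_iff_eq_empty, Finset.erase_eq_empty_iff] at hne
        rcases hne with hne | hne
        · exact absurd hne h.1.ne_empty
        · rw [hne]; infer_instance
      exact affineIndependent_of_subsingleton ℝ _

def wOpen (s : Finset (Euc m)) (x : Euc m) (w : Euc m → ℝ) : Prop :=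
  (∀ c ∈ s, 0 < w c) ∧ ∑ c ∈ s, w c = 1 ∧ ∀ i, ∑ c ∈ s, w c * c i = x i

lemma wOpen.top (hm : 1 ≤ m) {Z : Set (Euc m)} {J : Euc m → ℤ} (hJ : WSpec Z J)
    {s : Finset (Euc m)} (h : wFace Z J s) {d : Euc m} (hd : d ∈ s) (hC : ∀ c ∈ s, wC (J d) d c)
    {x : Euc m} {w : Euc m → ℝ} (hw : wOpen s x w) :
    J x = J d ∧ ∀ i, d i = (wlo (J x) (x i) + whi (J x) (x i)) / 2 := by
  have hdV := h.2.1 d hd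
  have key : ∀ i, wlo (J d) (x i) = wlo (J d) (d i) ∧ whi (J d) (x i) = whi (J d) (d i) := by
    intro i
    rcases (wlo_le_whi (J d) (d i)).lt_or_eq with hlt | heq
    · have hdi := hdV.2 i
      apply w_interior
      · calc wlo (J d) (d i) = ∑ c ∈ s, w c * wlo (J d) (d i) := by
              rw [← Finset.sum_mul, hw.2.1, one_mul]
          _ < ∑ c ∈ s, w c * c i := by
              apply Finset.sum_lt_sum
              · exact fun c hc => mul_le_mul_of_nonneg_left (hC c hc i).1 (hw.1 c hc).le
              · exact ⟨d, hd, mul_lt_mul_of_pos_left (by linarith) (hw.1 d hd)⟩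
          _ = x i := hw.2.2 i
      · calc x i = ∑ c ∈ s, w c * c i := (hw.2.2 i).symm
          _ < ∑ c ∈ s, w c * whi (J d) (d i) := by
              apply Finset.sum_lt_sum
              · exact fun c hc => mul_le_mul_of_nonneg_left (hC c hc i).2 (hw.1 c hc).le
              · exact ⟨d, hd, mul_lt_mul_of_pos_left (by linarith) (hw.1 d hd)⟩
          _ = whi (J d) (d i) := by rw [← Finset.sum_mul, hw.2.1, one_mul]
    · have hx : x i = d i := by
        rw [← hw.2.2 i]
        have : ∀ c ∈ s, w c * c i = w c * d i := by
          intro c hc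
          have h1 := hC c hc i
          have h2 := wlo_le (J d) (d i)
          have h3 := le_whi (J d) (d i)
          rw [show c i = d i by linarith]
        rw [Finset.sum_congr rfl this, ← Finset.sum_mul, hw.2.1, one_mul]
      rw [hx]; exact ⟨rfl, rfl⟩
  have h1 : wC (J d) d x := fun i => by
    rw [← (key i).1, ← (key i).2]; exact ⟨wlo_le _ _, le_whi _ _⟩
  have h2 : wC (J d) x d := fun i => by
    rw [(key i).1, (key i).2]; exact ⟨wlo_le _ _, le_whi _ _⟩
  have hJe := w_P1 hm hJ hdV.1 h1 h2
  refine ⟨hJe, fun i => ?_⟩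
  rw [hJe, (key i).1, (key i).2]; exact hdV.2 i

open Classical in
lemma wOpen.weight (hm : 1 ≤ m) {Z : Set (Euc m)} {J : Euc m → ℤ} (hJ : WSpec Z J)
    {s : Finset (Euc m)} (h : wFace Z J s) {d : Euc m} (hd : d ∈ s) (hC : ∀ c ∈ s, wC (J d) d c)
    {x : Euc m} {w : Euc m → ℝ} (hw : wOpen s x w) :
    (∀ i, |x i - d i| ≤ (1 - w d) * (2 ^ (J d) / 2)) ∧
      ∃ i, |x i - d i| = (1 - w d) * (2 ^ (J d) / 2) := by
  have hsum : ∑ c ∈ s.erase d, w c = 1 - w d := by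
    rw [← hw.2.1, ← Finset.add_sum_erase s w hd]; ring
  have hx : ∀ i, x i - d i = ∑ c ∈ s.erase d, w c * (c i - d i) := by
    intro i
    simp_rw [mul_sub]
    rw [Finset.sum_sub_distrib, ← Finset.sum_mul, hsum, ← hw.2.2 i,
      ← Finset.add_sum_erase s (fun c => w c * c i) hd]
    ring
  constructor
  · intro i
    rw [hx i, ← hsum, Finset.sum_mul]
    refine (Finset.abs_sum_le_sum_abs _ _).trans (Finset.sum_le_sum ?_)
    intro c hc
    have hc' := (Finset.mem_erase.1 hc).2
    rw [abs_mul, abs_of_pos (hw.1 c hc')]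
    apply mul_le_mul_of_nonneg_left _ (hw.1 c hc').le
    have h1 := hC c hc' i
    have h2 := (h.2.1 d hd).2 i
    have h3 := whi_le (J d) (d i)
    rw [abs_le]; constructor <;> linarith
  · by_cases hne : (s.erase d).Nonempty
    · obtain ⟨i, a, ha, hia⟩ := h.facet hm hJ hd hC hne
      refine ⟨i, ?_⟩
      rw [hx i, Finset.sum_congr rfl (fun c hc => by rw [hia c hc]), ← Finset.sum_mul, abs_mul, ha,
        hsum, abs_of_nonneg]
      rw [← hsum]
      exact Finset.sum_nonneg fun c hc => (hw.1 c (Finset.mem_erase.1 hc).2).le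
    · rw [Finset.not_nonempty_iff_eq_empty] at hne
      refine ⟨⟨0, hm⟩, ?_⟩
      rw [hx, ← hsum, hne]; simp

open Classical in
lemma wOpen.erase {s : Finset (Euc m)} {d : Euc m} (hd : d ∈ s)
    {x : Euc m} {w : Euc m → ℝ} (hw : wOpen s x w) {l : ℝ} (hl : w d = l) (hl1 : l < 1) :
    (s.erase d).Nonempty ∧ wOpen (s.erase d) (WithLp.toLp 2 fun i => (x i - l * d i) / (1 - l))
      (fun c => w c / (1 - l)) := by
  subst hl
  have hsum : ∑ c ∈ s.erase d, w c = 1 - w d := by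
    rw [← hw.2.1, ← Finset.add_sum_erase s w hd]; ring
  have hpos : 0 < 1 - w d := by linarith
  refine ⟨?_, ?_, ?_, ?_⟩
  · by_contra hne
    rw [Finset.not_nonempty_iff_eq_empty] at hne
    rw [hne, Finset.sum_empty] at hsum
    linarith
  · exact fun c hc => div_pos (hw.1 c (Finset.mem_erase.1 hc).2) hpos
  · rw [← Finset.sum_div, hsum, div_self hpos.ne']
  · intro i
    have : ∀ c ∈ s.erase d, w c / (1 - w d) * c i = (w c * c i) / (1 - w d) := by
      intro c _; ring
    rw [Finset.sum_congr rfl this, ← Finset.sum_div]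
    congr 1
    rw [← hw.2.2 i, ← Finset.add_sum_erase s (fun c => w c * c i) hd]
    ring

open Classical in
lemma wOpen.unique (hm : 1 ≤ m) {Z : Set (Euc m)} {J : Euc m → ℤ} (hJ : WSpec Z J) :
    ∀ (n : ℕ) {s t : Finset (Euc m)} {x : Euc m} {w v : Euc m → ℝ}, s.card = n →
      wFace Z J s → wFace Z J t → wOpen s x w → wOpen t x v → s = t := by
  intro n
  induction n with
  | zero => intro s t x w v hs h; exact absurd (Finset.card_eq_zero.1 hs) h.1.ne_empty
  | succ n ih =>
    intro s t x w v hcard hs ht hw hv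
    obtain ⟨d, hd, hC⟩ := hs.top hm hJ
    obtain ⟨e, he, hCe⟩ := ht.top hm hJ
    have h1 := hw.top hm hJ hs hd hC
    have h2 := hv.top hm hJ ht he hCe
    have hed : e = d := by
      ext i; rw [h1.2 i, h2.2 i]
    subst hed
    have hp := wpos (J e)
    obtain ⟨a1, i1, b1⟩ := hw.weight hm hJ hs hd hC
    obtain ⟨a2, i2, b2⟩ := hv.weight hm hJ ht he hCe
    have hwv : v e = w e := by
      have c1 := a1 i2
      have c2 := a2 i1
      rw [b2] at c1
      rw [b1] at c2
      have c1' := le_of_mul_le_mul_right c1 (by positivity)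
      have c2' := le_of_mul_le_mul_right c2 (by positivity)
      linarith
    by_cases hl : w e < 1
    · obtain ⟨n1, o1⟩ := hw.erase hd rfl hl
      obtain ⟨n2, o2⟩ := hv.erase he hwv hl
      have := ih (by rw [Finset.card_erase_of_mem hd, hcard]; rfl)
        (hs.mono (Finset.erase_subset _ _) n1) (ht.mono (Finset.erase_subset _ _) n2) o1 o2
      rw [← Finset.insert_erase hd, ← Finset.insert_erase he, this]
    · have aux : ∀ (u : Finset (Euc m)) (f : Euc m → ℝ), e ∈ u → wOpen u x f → ¬ f e < 1 →
          u = {e} := by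
        intro u f heu hf hfe
        have hsum := Finset.add_sum_erase u f heu
        rw [hf.2.1] at hsum
        by_contra hne
        have hne' : (u.erase e).Nonempty := by
          rw [Finset.nonempty_iff_ne_empty]
          intro h0
          rw [Finset.erase_eq_empty_iff] at h0
          rcases h0 with h0 | h0
          · rw [h0] at heu; simp at heu
          · exact hne h0
        have := Finset.sum_pos (fun c hc => hf.1 c (Finset.mem_erase.1 hc).2) hne'
        linarith
      rw [aux s w hd hw hl, aux t v he hv (by rw [hwv]; exact hl)]

open Classical in
lemma w_support {s : Finset (Euc m)} {x : Euc m} (hx : x ∈ convexHull ℝ (s : Set (Euc m))) :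
    ∃ s' ⊆ s, s'.Nonempty ∧ x ∈ convexHull ℝ (s' : Set (Euc m)) ∧ ∃ w, wOpen s' x w := by
  obtain ⟨w, h0, h1, h2⟩ := Finset.mem_convexHull'.1 hx
  have e1 : ∑ c ∈ s.filter (fun c => 0 < w c), w c = 1 := by
    rw [← h1]
    apply Finset.sum_subset (Finset.filter_subset _ _)
    intro c hc hc'
    have : ¬ 0 < w c := fun h => hc' (Finset.mem_filter.2 ⟨hc, h⟩)
    exact le_antisymm (not_lt.1 this) (h0 c hc)
  have e2 : ∑ c ∈ s.filter (fun c => 0 < w c), w c • c = x := by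
    rw [← h2]
    apply Finset.sum_subset (Finset.filter_subset _ _)
    intro c hc hc'
    have : ¬ 0 < w c := fun h => hc' (Finset.mem_filter.2 ⟨hc, h⟩)
    rw [le_antisymm (not_lt.1 this) (h0 c hc), zero_smul]
  refine ⟨s.filter (fun c => 0 < w c), Finset.filter_subset _ _, ?_, ?_, w, ?_, e1, ?_⟩
  · rw [Finset.nonempty_iff_ne_empty]
    intro h; rw [h] at e1; simp at e1
  · exact Finset.mem_convexHull'.2 ⟨w, fun c hc => (Finset.mem_filter.1 hc).2.le, e1, e2⟩
  · exact fun c hc => (Finset.mem_filter.1 hc).2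
  · intro i
    have := congrArg (fun y : Euc m => y i) e2
    simpa using this

open Classical in
def wComplex (hm : 1 ≤ m) {Z : Set (Euc m)} {J : Euc m → ℤ} (hJ : WSpec Z J) :
    Geometry.SimplicialComplex ℝ (Euc m) where
  faces := {s | wFace Z J s}
  isRelLowerSet_faces := fun s hs => ⟨hs.1, fun t hts ht => hs.mono hts ht⟩
  indep := fun {s} hs => wFace.indep hm hJ s.card rfl hs
  inter_subset_convexHull := by
    rintro s t hs ht x ⟨hxs, hxt⟩
    obtain ⟨s', hs', n1, c1, w, hw⟩ := w_support hxs
    obtain ⟨t', ht', n2, c2, v, hv⟩ := w_support hxt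
    have := wOpen.unique hm hJ s'.card rfl (hs.mono hs' n1) (ht.mono ht' n2) hw hv
    refine convexHull_mono ?_ c1
    intro y hy
    exact ⟨hs' hy, ht' (this ▸ hy)⟩

lemma w_half {j : ℤ} {s : ℝ} {n : ℤ} (h1 : 2 ^ j * n < s) (h2 : s < 2 ^ j * n + 2 ^ j) :
    wlo j s = 2 ^ j * n ∧ whi j s = 2 ^ j * n + 2 ^ j := by
  have e : (2 : ℝ) ^ j * n + 2 ^ j = 2 ^ j * ((n + 1 : ℤ) : ℝ) := by push_cast; ring
  have a := le_wlo_int h1.le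
  have b := whi_gt_int h1
  rw [e] at h2
  have c := wlo_lt_int h2
  have d := whi_le_int h2.le
  constructor <;> linarith

open Classical in
lemma w_perturb (hm : 1 ≤ m) {Z : Set (Euc m)} {J : Euc m → ℤ} (hJ : WSpec Z J) {y : Euc m}
    (hy : y ∉ Z) (K : Finset (Fin m)) (ε : Fin m → ℝ) (hε : ∀ i, ε i = 1 ∨ ε i = -1) :
    ∃ z, z ∉ Z ∧ J y ≤ J z ∧ wC (J z) z y ∧ (∀ i, i ∉ K → z i = y i) ∧
      (∀ i ∈ K, wlo (J y) (z i) < whi (J y) (z i)) ∧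
      ∀ i, z i = y i ∨ (i ∈ K ∧ wlo (J y) (y i) = y i ∧ whi (J y) (y i) = y i ∧
        z i = y i + ε i * (2 ^ (J y) / 2)) := by
  have hp := wpos (J y)
  let z : Euc m := WithLp.toLp 2 fun i =>
    if i ∈ K ∧ wlo (J y) (y i) = whi (J y) (y i) then y i + ε i * (2 ^ (J y) / 2) else y i
  have hz : ∀ i, z i =
      if i ∈ K ∧ wlo (J y) (y i) = whi (J y) (y i) then y i + ε i * (2 ^ (J y) / 2) else y i :=
    fun i => rfl
  have hmain : ∀ i, (wlo (J y) (z i) ≤ y i ∧ y i ≤ whi (J y) (z i)) ∧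
      (i ∈ K → wlo (J y) (z i) < whi (J y) (z i)) ∧
      (z i = y i ∨ (i ∈ K ∧ wlo (J y) (y i) = y i ∧ whi (J y) (y i) = y i ∧
        z i = y i + ε i * (2 ^ (J y) / 2))) := by
    intro i
    by_cases h : i ∈ K ∧ wlo (J y) (y i) = whi (J y) (y i)
    · have h1 : z i = y i + ε i * (2 ^ (J y) / 2) := by rw [hz, if_pos h]
      have h2 := wlo_le (J y) (y i)
      have h3 := le_whi (J y) (y i)
      have h4 : wlo (J y) (y i) = y i := by linarith [h.2]
      have h5 : whi (J y) (y i) = y i := by linarith [h.2]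
      obtain ⟨n, hn⟩ := wlo_int (le_refl (J y)) (y i)
      rw [h4] at hn
      have h6 : wlo (J y) (z i) ≤ y i ∧ y i ≤ whi (J y) (z i) ∧
          wlo (J y) (z i) < whi (J y) (z i) := by
        rcases hε i with he | he
        · have := w_half (j := J y) (s := z i) (n := n) (by rw [h1, he]; linarith)
            (by rw [h1, he]; linarith)
          rw [this.1, this.2]
          refine ⟨?_, ?_, ?_⟩ <;> linarith
        · have e : (2 : ℝ) ^ (J y) * ((n - 1 : ℤ) : ℝ) = 2 ^ (J y) * n - 2 ^ (J y) := by
            push_cast; ring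
          have := w_half (j := J y) (s := z i) (n := n - 1) (by rw [h1, he, e]; linarith)
            (by rw [h1, he, e]; linarith)
          rw [this.1, this.2, e]
          refine ⟨?_, ?_, ?_⟩ <;> linarith
      exact ⟨⟨h6.1, h6.2.1⟩, fun _ => h6.2.2, Or.inr ⟨h.1, h4, h5, h1⟩⟩
    · have h1 : z i = y i := by rw [hz, if_neg h]
      rw [h1]
      refine ⟨⟨wlo_le _ _, le_whi _ _⟩, fun hK => ?_, Or.inl rfl⟩
      exact lt_of_le_of_ne (wlo_le_whi _ _) fun h' => h ⟨hK, h'⟩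
  have hC : wC (J y) z y := fun i => (hmain i).1
  obtain ⟨hzZ, hle⟩ := w_P5 hm hJ hy hC
  refine ⟨z, hzZ, hle, wC_scale hle hC, ?_, fun i hi => (hmain i).2.1 hi, fun i => (hmain i).2.2⟩
  intro i hi
  rw [hz, if_neg (fun h => hi h.1)]

lemma w_ctr (hm : 1 ≤ m) {Z : Set (Euc m)} {J : Euc m → ℤ} (hJ : WSpec Z J) {z : Euc m}
    (hz : z ∉ Z) : ∃ e, wV Z J e ∧ J e = J z ∧
      ∀ i, wlo (J z) (e i) = wlo (J z) (z i) ∧ whi (J z) (e i) = whi (J z) (z i) := by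
  let e : Euc m := WithLp.toLp 2 fun i => (wlo (J z) (z i) + whi (J z) (z i)) / 2
  have he : ∀ i, e i = (wlo (J z) (z i) + whi (J z) (z i)) / 2 := fun i => rfl
  have key : ∀ i, wlo (J z) (e i) = wlo (J z) (z i) ∧ whi (J z) (e i) = whi (J z) (z i) := by
    intro i
    rcases (wlo_le_whi (J z) (z i)).lt_or_eq with h | h
    · apply w_interior <;> rw [he] <;> linarith
    · have h2 := wlo_le (J z) (z i)
      have h3 := le_whi (J z) (z i)
      rw [show e i = z i by rw [he]; linarith]
      exact ⟨rfl, rfl⟩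
  have h1 : wC (J z) z e := fun i => by
    rw [← (key i).1, ← (key i).2]; exact ⟨wlo_le _ _, le_whi _ _⟩
  have h2 : wC (J z) e z := fun i => by
    rw [(key i).1, (key i).2]; exact ⟨wlo_le _ _, le_whi _ _⟩
  have hJe := w_P1 hm hJ hz h1 h2
  refine ⟨e, ⟨(w_P2 hm hJ hz h1).1, fun i => ?_⟩, hJe, key⟩
  rw [hJe, (key i).1, (key i).2, he]

lemma w_mid {Z : Set (Euc m)} {J : Euc m → ℤ} {d : Euc m} (hd : wV Z J d) {i : Fin m}
    (hi : i ∈ wI J d) : wlo (J d) (d i) = d i - 2 ^ (J d) / 2 ∧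
      whi (J d) (d i) = d i + 2 ^ (J d) / 2 := by
  have h1 := hd.2 i
  have h2 := mem_wI.1 hi
  rcases whi_eq_or (J d) (d i) with h | h
  · linarith
  · constructor <;> linarith

lemma w_nonfree {J : Euc m → ℤ} {d y : Euc m} {i : Fin m} (hi : i ∉ wI J d)
    (hy : wC (J d) d y) : y i = d i ∧ wlo (J d) (d i) = d i ∧ whi (J d) (d i) = d i := by
  rw [mem_wI, not_lt] at hi
  have h1 := hy i
  have h2 := wlo_le (J d) (d i)
  have h3 := le_whi (J d) (d i)
  refine ⟨?_, ?_, ?_⟩ <;> linarith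

open Classical in
lemma w_radial {Z : Set (Euc m)} {J : Euc m → ℤ} {d : Euc m} (hd : wV Z J d)
    (hne : (wI J d).Nonempty) {y : Euc m} (hy : wC (J d) d y) :
    ∃ y', wC (J d) d y' ∧ (∃ i ∈ wI J d, y' i = wlo (J d) (d i) ∨ y' i = whi (J d) (d i)) ∧
      ∃ ρ : ℝ, 0 ≤ ρ ∧ ρ ≤ 1 ∧ y = (1 - ρ) • d + ρ • y' := by
  have hp := wpos (J d)
  obtain ⟨i, hi, hmax⟩ := Finset.exists_max_image (wI J d) (fun i => |y i - d i|) hne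
  by_cases hM : |y i - d i| = 0
  · refine ⟨WithLp.toLp 2 (fun k => if k = i then wlo (J d) (d i) else d k), ?_, ⟨i, hi, ?_⟩,
      0, le_rfl, zero_le_one, ?_⟩
    · intro k
      by_cases hk : k = i
      · subst hk; simp [wlo_le_whi]
      · simp [hk, wlo_le, le_whi]
    · left; simp
    · ext k
      simp only [sub_zero, one_smul, zero_smul, add_zero]
      by_cases hk : k ∈ wI J d
      · have h1 := hmax k hk
        rw [hM] at h1
        have := abs_eq_zero.1 (le_antisymm h1 (abs_nonneg _))
        linarith
      · exact (w_nonfree hk hy).1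
  · have hMpos : 0 < |y i - d i| := lt_of_le_of_ne (abs_nonneg _) (Ne.symm hM)
    set M := |y i - d i| with hMdef
    set L := (2 : ℝ) ^ (J d) with hL
    have hML : M ≤ L / 2 := by
      have h1 := hy i
      rw [(w_mid hd hi).1, (w_mid hd hi).2] at h1
      rw [hMdef, abs_le]; constructor <;> linarith
    have hscale : ∀ k, |L / 2 / M * (y k - d k)| = L / 2 / M * |y k - d k| := by
      intro k; rw [abs_mul, abs_of_pos (by positivity)]
    refine ⟨WithLp.toLp 2 (fun k => d k + L / 2 / M * (y k - d k)), ?_, ⟨i, hi, ?_⟩,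
      M / (L / 2), by positivity, ?_, ?_⟩
    · intro k
      by_cases hk : k ∈ wI J d
      · have h1 : |L / 2 / M * (y k - d k)| ≤ L / 2 := by
          rw [hscale]
          calc L / 2 / M * |y k - d k| ≤ L / 2 / M * M :=
                mul_le_mul_of_nonneg_left (hmax k hk) (by positivity)
            _ = L / 2 := by field_simp
        rw [(w_mid hd hk).1, (w_mid hd hk).2]
        rw [abs_le] at h1
        simp only
        constructor <;> linarith
      · have h1 := w_nonfree hk hy
        simp only [h1.1, sub_self, mul_zero, add_zero]
        exact ⟨wlo_le _ _, le_whi _ _⟩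
    · have h1 : |L / 2 / M * (y i - d i)| = L / 2 := by
        rw [hscale, ← hMdef]; field_simp
      rw [(w_mid hd hi).1, (w_mid hd hi).2]
      rcases eq_or_eq_neg_of_abs_eq h1 with h | h
      · right; simp only; linarith
      · left; simp only; linarith
    · rw [div_le_one (by positivity)]; exact hML
    · ext k
      simp
      field_simp
      ring

open Classical in
lemma w_cover (hm : 1 ≤ m) {Z : Set (Euc m)} {J : Euc m → ℤ} (hJ : WSpec Z J) :
    ∀ (k : ℕ) {d : Euc m}, wV Z J d → (wI J d).card = k → ∀ y, wC (J d) d y →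
      ∃ s, wFace Z J s ∧ s.card = k + 1 ∧ (∀ c ∈ s, wC (J d) d c) ∧
        y ∈ convexHull ℝ (s : Set (Euc m)) := by
  intro k
  induction k with
  | zero =>
    intro d hd hk y hy
    have hyd : y = d := by
      ext i
      refine (w_nonfree ?_ hy).1
      rw [Finset.card_eq_zero.1 hk]; simp
    subst hyd
    refine ⟨{y}, ⟨by simp, by simpa using hd, by simpa using wC_refl _ _⟩, by simp,
      by simpa using hy, by simp⟩
  | succ k ih =>
    intro d hd hk y hy
    obtain ⟨y', hy', ⟨i, hi, hyi⟩, ρ, hρ0, hρ1, hρ⟩ :=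
      w_radial hd (Finset.card_pos.1 (by omega)) hy
    obtain ⟨hy'Z, hJy', -⟩ := w_P2 hm hJ hd.1 hy'
    obtain ⟨z, hzZ, hle, hzC, hz1, hz2, hz3⟩ := w_perturb hm hJ hy'Z ((wI J d).erase i)
      (fun l => if y' l < whi (J d) (d l) then 1 else -1)
      (by intro l; simp only; split_ifs <;> simp)
    have hdz : wC (J d) d z := by
      intro l
      have hp := wpos (J y')
      have hl := hy' l
      rcases hz3 l with h | ⟨hlK, h1, h2, h3⟩
      · rw [h]; exact hl
      · have hlI := mem_wI.1 (Finset.mem_erase.1 hlK).2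
        rw [h3]
        split_ifs with h
        · obtain ⟨n, hn⟩ := whi_int hJy' (d l)
          have := wlo_lt_int (hn ▸ h)
          rw [h1, ← hn] at this
          constructor <;> linarith
        · have h' : wlo (J d) (d l) < y' l := by linarith
          obtain ⟨n, hn⟩ := wlo_int hJy' (d l)
          have := whi_gt_int (hn ▸ h')
          rw [h2, ← hn] at this
          constructor <;> linarith
    have hJz := (w_P2 hm hJ hd.1 hdz).2.1
    obtain ⟨e, heV, hJe, he⟩ := w_ctr hm hJ hzZ
    have hIz : ∀ l, l ∈ wI J e ↔ wlo (J z) (z l) < whi (J z) (z l) := by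
      intro l; rw [mem_wI, hJe, (he l).1, (he l).2]
    have hzi : z i = y' i := hz1 i (by simp)
    have hzifix : wlo (J z) (z i) = z i ∧ whi (J z) (z i) = z i := by
      rw [hzi]
      rcases hyi with h | h
      · rw [h]; exact w_wlo hJz _
      · rw [h]; exact w_whi hJz _
    have hIe : wI J e = (wI J d).erase i := by
      ext l
      rw [hIz]
      constructor
      · intro h
        rw [Finset.mem_erase]
        constructor
        · rintro rfl
          rw [hzifix.1, hzifix.2] at h
          exact lt_irrefl _ h
        · by_contra hl
          have h1 := w_nonfree hl hdz
          have h2 : wlo (J z) (z l) = z l ∧ whi (J z) (z l) = z l := by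
            rw [h1.1, ← h1.2.1]; exact w_wlo hJz _
          rw [h2.1, h2.2] at h
          exact lt_irrefl _ h
      · intro hl
        exact lt_of_le_of_lt (wlo_mono hle (wlo_le _ _))
          (lt_of_lt_of_le (hz2 l hl) (whi_mono hle (le_whi _ _)))
    have hey' : wC (J e) e y' := by
      intro l; rw [hJe, (he l).1, (he l).2]; exact hzC l
    have hde : wC (J d) d e := by
      refine wC_trans hJz hdz (fun l => ?_)
      rw [← (he l).1, ← (he l).2]; exact ⟨wlo_le _ _, le_whi _ _⟩
    obtain ⟨s, hs, hcard, hsC, hys⟩ := ih heV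
      (by rw [hIe, Finset.card_erase_of_mem hi, hk]; rfl) y' hey'
    have hsd : ∀ c ∈ s, wC (J d) d c := fun c hc =>
      wC_trans (by rw [hJe]; exact hJz) hde (hsC c hc)
    have hds : d ∉ s := by
      intro h
      have h1 := hsC d h i
      rw [hJe, (he i).1, (he i).2, hzifix.1, hzifix.2, hzi] at h1
      have h2 := w_mid hd hi
      have hp := wpos (J d)
      rcases hyi with h3 | h3 <;> linarith
    refine ⟨insert d s, ⟨Finset.insert_nonempty _ _, ?_, ?_⟩, ?_, ?_, ?_⟩
    · intro c hc
      rcases Finset.mem_insert.1 hc with rfl | hc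
      · exact hd
      · exact hs.2.1 c hc
    · intro c hc c' hc'
      rw [Finset.mem_insert] at hc hc'
      rcases hc with h1 | h1 <;> rcases hc' with h2 | h2
      · rw [h1, h2]; exact Or.inl (wC_refl _ _)
      · rw [h1]; exact Or.inr (hsd _ h2)
      · rw [h2]; exact Or.inl (hsd _ h1)
      · exact hs.2.2 c h1 c' h2
    · rw [Finset.card_insert_of_notMem hds, hcard]
    · intro c hc
      rcases Finset.mem_insert.1 hc with rfl | hc
      · exact wC_refl _ _
      · exact hsd _ hc
    · rw [hρ]
      refine convex_convexHull ℝ _ (subset_convexHull ℝ _ (by simp))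
        (convexHull_mono (by simp) hys) (by linarith) hρ0 (by ring)

lemma w_cover_top (hm : 1 ≤ m) {Z : Set (Euc m)} {J : Euc m → ℤ} (hJ : WSpec Z J) {x : Euc m}
    (hx : x ∉ Z) : ∃ s, wFace Z J s ∧ s.card = m + 1 ∧ x ∈ convexHull ℝ (s : Set (Euc m)) := by
  obtain ⟨z, hzZ, hle, hzC, -, hz2, -⟩ := w_perturb hm hJ hx Finset.univ (fun _ => 1) (by simp)
  obtain ⟨e, heV, hJe, he⟩ := w_ctr hm hJ hzZ
  have hI : wI J e = Finset.univ := by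
    ext l
    simp only [Finset.mem_univ, iff_true]
    rw [mem_wI, hJe, (he l).1, (he l).2]
    exact lt_of_le_of_lt (wlo_mono hle (wlo_le _ _))
      (lt_of_lt_of_le (hz2 l (Finset.mem_univ _)) (whi_mono hle (le_whi _ _)))
  obtain ⟨s, h1, h2, -, h3⟩ := w_cover hm hJ m heV (by rw [hI]; simp) x
    (fun l => by rw [hJe, (he l).1, (he l).2]; exact hzC l)
  exact ⟨s, h1, h2, h3⟩

def wval (ω t : Finset (Euc m)) : ℝ :=
  Metric.infDist (ω.centroid ℝ id)
    ((affineSpan ℝ (t : Set (Euc m)) : AffineSubspace ℝ (Euc m)) : Set (Euc m))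

lemma faceSet_finite (ω : Finset (Euc m)) :
    {d | ∃ t ⊆ ω, t.card = ω.card - 1 ∧ d = wval ω t}.Finite := by
  refine (ω.powerset.finite_toSet.image (fun t => wval ω t)).subset ?_
  rintro d ⟨t, ht, -, rfl⟩
  exact ⟨t, by simpa using ht, rfl⟩

lemma faceSet_nonempty (ω : Finset (Euc m)) :
    {d | ∃ t ⊆ ω, t.card = ω.card - 1 ∧ d = wval ω t}.Nonempty := by
  obtain ⟨t, ht, hc⟩ := Finset.exists_subset_card_eq (s := ω) (n := ω.card - 1) (by omega)
  exact ⟨_, t, ht, hc, rfl⟩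

lemma betaSet_finite (σ : Finset (Euc m)) (f : Finset (Euc m) → ℝ) :
    {b | ∃ ω ⊆ σ, 2 ≤ ω.card ∧ b = f ω}.Finite := by
  refine (σ.powerset.finite_toSet.image f).subset ?_
  rintro d ⟨t, ht, -, rfl⟩
  exact ⟨t, by simpa using ht, rfl⟩

lemma wval_pos {ω t : Finset (Euc m)} (hω : AffineIndependent ℝ ((↑) : ω → Euc m))
    (h2 : 2 ≤ ω.card) (ht : t ⊆ ω) (hc : t.card = ω.card - 1) : 0 < wval ω t := by
  classical
  have htne : t.Nonempty := Finset.card_pos.1 (by omega)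
  have hclosed : IsClosed ((affineSpan ℝ (t : Set (Euc m)) : AffineSubspace ℝ (Euc m)) :
      Set (Euc m)) := AffineSubspace.closed_of_finiteDimensional _
  refine (hclosed.notMem_iff_infDist_pos ?_).1 ?_
  · exact (affineSpan_nonempty ℝ).2 (Finset.coe_nonempty.2 htne)
  · intro hmem
    obtain ⟨a, ha, hat⟩ : ∃ a ∈ ω, a ∉ t := by
      by_contra hcon
      push Not at hcon
      have := Finset.card_le_card (show ω ⊆ t from hcon)
      omega
    rw [← Finset.centroid_univ, Finset.centroid_def] at hmem
    have him : (t : Set (Euc m)) = ((↑) : ω → Euc m) '' {x | x.1 ∈ t} := by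
      ext x
      constructor
      · intro hx; exact ⟨⟨x, ht hx⟩, hx, rfl⟩
      · rintro ⟨y, hy, rfl⟩; exact hy
    rw [him] at hmem
    have hne : (Finset.univ : Finset ω).Nonempty := ⟨⟨a, ha⟩, Finset.mem_univ _⟩
    have := hω.eq_zero_of_affineCombination_mem_affineSpan
      (Finset.sum_centroidWeights_eq_one_of_nonempty ℝ _ hne) hmem
      (Finset.mem_univ ⟨a, ha⟩) hat
    rw [Finset.centroidWeights_apply] at this
    have h3 : (Finset.univ : Finset ω).card ≠ 0 := Finset.card_ne_zero.2 hne
    simp at this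
    rw [this] at ha; simp at ha

lemma wval_le {s ω t : Finset (Euc m)} (hs : ω ⊆ s)
    (h2 : 2 ≤ ω.card) (ht : t ⊆ ω) (hc : t.card = ω.card - 1) : wval ω t ≤ simpDiam m s := by
  have htne : t.Nonempty := Finset.card_pos.1 (by omega)
  have hωne : ω.Nonempty := Finset.card_pos.1 (by omega)
  obtain ⟨p, hp⟩ := htne
  refine (infDist_le_dist_of_mem (subset_affineSpan ℝ _ (show p ∈ (t : Set (Euc m)) from hp))).trans ?_
  apply dist_le_diam_of_mem
  · exact isBounded_convexHull.2 s.finite_toSet.isBounded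
  · exact convexHull_mono (by exact_mod_cast hs) (ω.centroid_mem_convexHull hωne)
  · exact subset_convexHull ℝ _ (hs (ht hp))

lemma w_beta {s : Finset (Euc m)} (hs : AffineIndependent ℝ ((↑) : s → Euc m))
    (h2 : 2 ≤ s.card) : 0 < betaLow m s ∧ betaLow m s ≤ betaHigh m s ∧
      betaHigh m s ≤ simpDiam m s := by
  have hmem : betaLow m s ∈ {b | ∃ ω ⊆ s, 2 ≤ ω.card ∧ b = faceBetaMin m ω} :=
    Set.Nonempty.csInf_mem ⟨_, s, subset_rfl, h2, rfl⟩ (betaSet_finite _ _)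
  obtain ⟨ω, hω, hω2, hb⟩ := hmem
  have hmem2 : faceBetaMin m ω ∈ {d | ∃ t ⊆ ω, t.card = ω.card - 1 ∧ d = wval ω t} :=
    Set.Nonempty.csInf_mem (faceSet_nonempty ω) (faceSet_finite ω)
  obtain ⟨t, ht, htc, hbt⟩ := hmem2
  refine ⟨?_, ?_, ?_⟩
  · rw [hb, hbt]
    exact wval_pos (hs.mono (by exact_mod_cast hω)) hω2 ht htc
  · calc betaLow m s = wval ω t := by rw [hb, hbt]
      _ ≤ faceBetaMax m ω := le_csSup (faceSet_finite ω).bddAbove ⟨t, ht, htc, rfl⟩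
      _ ≤ betaHigh m s := le_csSup (betaSet_finite s _).bddAbove ⟨ω, hω, hω2, rfl⟩
  · have hn : {b | ∃ ω ⊆ s, 2 ≤ ω.card ∧ b = faceBetaMax m ω}.Nonempty :=
      ⟨_, s, subset_rfl, h2, rfl⟩
    refine csSup_le hn ?_
    rintro b ⟨ω, hω, hω2, rfl⟩
    apply csSup_le (faceSet_nonempty ω)
    rintro b ⟨t, ht, htc, rfl⟩
    exact wval_le hω hω2 ht htc

def wf (r : ℝ) (b : Euc m) (x : Euc m) : Euc m := r • x + b

def wfa (r : ℝ) (b : Euc m) : Euc m →ᵃ[ℝ] Euc m :=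
  r • AffineMap.id ℝ (Euc m) + AffineMap.const ℝ (Euc m) b

lemma wfa_coe (r : ℝ) (b : Euc m) : ⇑(wfa r b) = wf r b := by
  ext x; simp [wfa, wf]

lemma wf_inj {r : ℝ} (hr : 0 < r) (b : Euc m) : Function.Injective (wf r b) := by
  intro x y h
  simpa [wf, hr.ne'] using h

open scoped Pointwise

lemma wf_image (r : ℝ) (b : Euc m) (A : Set (Euc m)) :
    wf r b '' A = (fun x => x + b) '' (r • A) := by
  rw [← Set.image_smul, Set.image_image]; rfl

lemma wf_infDist {r : ℝ} (hr : 0 < r) (b x : Euc m) (A : Set (Euc m)) :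
    infDist (wf r b x) (wf r b '' A) = r * infDist x A := by
  rw [wf_image, show wf r b x = (fun x => x + b) (r • x) from rfl,
    infDist_image (isometry_add_right b), infDist_smul₀ hr.ne', Real.norm_of_nonneg hr.le]

open Classical in
lemma wf_wval {r : ℝ} (hr : 0 < r) (b : Euc m) {ω t : Finset (Euc m)} (hω : ω.Nonempty) :
    wval (ω.image (wf r b)) (t.image (wf r b)) = r * wval ω t := by
  unfold wval
  have h1 : (ω.image (wf r b)).centroid ℝ id = wf r b (ω.centroid ℝ id) := by
    have e : ω.image (wf r b) = ω.map ⟨wf r b, wf_inj hr b⟩ := by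
      rw [Finset.map_eq_image]; rfl
    have h := Finset.map_affineCombination ω id (ω.centroidWeights ℝ)
      (Finset.sum_centroidWeights_eq_one_of_nonempty ℝ _ hω) (wfa r b)
    rw [wfa_coe] at h
    rw [e, Finset.centroid_map, Finset.centroid_def, Finset.centroid_def]
    exact h.symm
  have h2 : ((affineSpan ℝ ((t.image (wf r b) : Finset (Euc m)) : Set (Euc m)) :
      AffineSubspace ℝ (Euc m)) : Set (Euc m)) =
      wf r b '' (affineSpan ℝ (t : Set (Euc m)) : AffineSubspace ℝ (Euc m)) := by
    rw [Finset.coe_image, ← wfa_coe, ← AffineSubspace.map_span, AffineSubspace.coe_map]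
  rw [h1, h2, wf_infDist hr]

open Classical in
lemma wf_faceBetaMin {r : ℝ} (hr : 0 < r) (b : Euc m) {ω : Finset (Euc m)} (hω : ω.Nonempty) :
    faceBetaMin m (ω.image (wf r b)) = r * faceBetaMin m ω := by
  rw [← smul_eq_mul]
  unfold faceBetaMin
  rw [← Real.sInf_smul_of_nonneg hr.le]
  congr 1
  ext d
  rw [Set.mem_smul_set]
  constructor
  · rintro ⟨t, ht, hc, rfl⟩
    obtain ⟨t', ht', rfl⟩ := Finset.subset_image_iff.1 ht
    rw [Finset.card_image_of_injective _ (wf_inj hr b),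
      Finset.card_image_of_injective _ (wf_inj hr b)] at hc
    exact ⟨wval ω t', ⟨t', ht', hc, rfl⟩, (wf_wval hr b hω).symm⟩
  · rintro ⟨_, ⟨t, ht, hc, rfl⟩, rfl⟩
    refine ⟨t.image (wf r b), Finset.image_subset_image ht, ?_, (wf_wval hr b hω).symm⟩
    rw [Finset.card_image_of_injective _ (wf_inj hr b),
      Finset.card_image_of_injective _ (wf_inj hr b), hc]

open Classical in
lemma wf_betaLow {r : ℝ} (hr : 0 < r) (b : Euc m) (s : Finset (Euc m)) :
    betaLow m (s.image (wf r b)) = r * betaLow m s := by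
  rw [← smul_eq_mul]
  unfold betaLow
  rw [← Real.sInf_smul_of_nonneg hr.le]
  congr 1
  ext d
  rw [Set.mem_smul_set]
  constructor
  · rintro ⟨t, ht, hc, rfl⟩
    obtain ⟨t', ht', rfl⟩ := Finset.subset_image_iff.1 ht
    rw [Finset.card_image_of_injective _ (wf_inj hr b)] at hc
    exact ⟨_, ⟨t', ht', hc, rfl⟩, (wf_faceBetaMin hr b (Finset.card_pos.1 (by omega))).symm⟩
  · rintro ⟨_, ⟨t, ht, hc, rfl⟩, rfl⟩
    refine ⟨t.image (wf r b), Finset.image_subset_image ht, ?_,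
      (wf_faceBetaMin hr b (Finset.card_pos.1 (by omega))).symm⟩
    rw [Finset.card_image_of_injective _ (wf_inj hr b)]; exact hc

open Classical in
lemma wf_simpDiam {r : ℝ} (hr : 0 < r) (b : Euc m) (s : Finset (Euc m)) :
    simpDiam m (s.image (wf r b)) = r * simpDiam m s := by
  unfold simpDiam
  rw [convexHull_diam, convexHull_diam, Finset.coe_image, wf_image,
    (isometry_add_right b).diam_image, diam_smul₀, Real.norm_of_nonneg hr.le]

open Classical in
def wGrid (m : ℕ) : Finset (Euc m) :=
  Finset.univ.image (fun v : Fin m → Fin 5 => WithLp.toLp 2 (fun i => ((v i : ℕ) : ℝ) - 2))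

lemma mem_wGrid {x : Euc m} (h : ∀ i, ∃ n : ℤ, |n| ≤ 2 ∧ x i = n) : x ∈ wGrid m := by
  classical
  choose n hn hx using h
  unfold wGrid
  rw [Finset.mem_image]
  have hb : ∀ i, 0 ≤ n i + 2 ∧ n i + 2 < 5 := fun i => by
    have := abs_le.1 (hn i)
    omega
  refine ⟨fun i => ⟨(n i + 2).toNat, by have := hb i; omega⟩, Finset.mem_univ _, ?_⟩
  ext i
  simp only [hx i]
  have h2 : (((n i + 2).toNat : ℕ) : ℝ) = (n i : ℝ) + 2 := by
    rw [← Int.cast_natCast, Int.toNat_of_nonneg (hb i).1]; push_cast; ring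
  linarith

open Classical in
lemma w_class (hm : 1 ≤ m) {Z : Set (Euc m)} {J : Euc m → ℤ} (hJ : WSpec Z J)
    {s : Finset (Euc m)} (h : wFace Z J s) :
    ∃ (r : ℝ) (b : Euc m), 0 < r ∧ s.image (wf r b) ∈ (wGrid m).powerset := by
  obtain ⟨d, hd, hC⟩ := h.top hm hJ
  have hp := wpos (J d - 2)
  refine ⟨((2 : ℝ) ^ (J d - 2))⁻¹, -(((2 : ℝ) ^ (J d - 2))⁻¹ • d), by positivity, ?_⟩
  rw [Finset.mem_powerset]
  intro x hx
  obtain ⟨c, hc, rfl⟩ := Finset.mem_image.1 hx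
  apply mem_wGrid
  intro i
  have e1 : (2 : ℝ) ^ (J d - 1) = 2 * 2 ^ (J d - 2) := by
    rw [show J d - 1 = (J d - 2) + 1 by ring, zpow_add_one₀ (by norm_num)]; ring
  have e2 : (2 : ℝ) ^ (J d) = 4 * 2 ^ (J d - 2) := by
    rw [show J d = (J d - 1) + 1 by ring, zpow_add_one₀ (by norm_num), e1]
    ring_nf
  have hrep : ∀ c', wV Z J c' → J d - 1 ≤ J c' → ∃ n : ℤ, c' i = 2 ^ (J d - 2) * n := by
    intro c' hV hle
    obtain ⟨n1, h1⟩ := wlo_int hle (c' i)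
    obtain ⟨n2, h2⟩ := whi_int hle (c' i)
    refine ⟨n1 + n2, ?_⟩
    rw [hV.2 i, h1, h2, e1]; push_cast; ring
  obtain ⟨n1, h1⟩ := hrep c (h.2.1 c hc) (w_P2 hm hJ (h.2.1 d hd).1 (hC c hc)).2.2
  obtain ⟨n2, h2⟩ := hrep d (h.2.1 d hd) (by omega)
  refine ⟨n1 - n2, ?_, ?_⟩
  · have a1 := hC c hc i
    have a2 := (h.2.1 d hd).2 i
    have a3 := whi_le (J d) (d i)
    have a4 : |c i - d i| ≤ 2 * 2 ^ (J d - 2) := by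
      rw [abs_le]; constructor <;> linarith
    have a5 : c i - d i = 2 ^ (J d - 2) * ((n1 - n2 : ℤ) : ℝ) := by
      rw [h1, h2]; push_cast; ring
    rw [a5, abs_mul, abs_of_pos hp, mul_comm] at a4
    have a6 := le_of_mul_le_mul_right a4 hp
    have a7 : ((|n1 - n2| : ℤ) : ℝ) ≤ ((2 : ℤ) : ℝ) := by
      rw [Int.cast_abs]; simpa using a6
    exact Int.cast_le.1 a7
  · simp only [wf, PiLp.add_apply, PiLp.smul_apply, PiLp.neg_apply, smul_eq_mul, h1, h2]
    push_cast
    field_simp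
    ring

lemma wBox_convex (j : ℤ) (d : Euc m) : Convex ℝ {y : Euc m | wC j d y} := by
  intro x hx y hy a b ha hb hab i
  have h1 := hx i
  have h2 := hy i
  simp only [PiLp.add_apply, PiLp.smul_apply, smul_eq_mul]
  have e : ∀ l : ℝ, a * l + b * l = l := fun l => by rw [← add_mul, hab, one_mul]
  constructor
  · have := e (wlo j (d i))
    linarith [mul_le_mul_of_nonneg_left h1.1 ha, mul_le_mul_of_nonneg_left h2.1 hb]
  · have := e (whi j (d i))
    linarith [mul_le_mul_of_nonneg_left h1.2 ha, mul_le_mul_of_nonneg_left h2.2 hb]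

lemma w_hull {J : Euc m → ℤ} {s : Finset (Euc m)} {d : Euc m} (hC : ∀ c ∈ s, wC (J d) d c) :
    convexHull ℝ (s : Set (Euc m)) ⊆ {y | wC (J d) d y} :=
  convexHull_min (fun c hc => hC c hc) (wBox_convex _ _)

lemma w_metric (hm : 1 ≤ m) {Z : Set (Euc m)} (hne : Z.Nonempty) {J : Euc m → ℤ}
    (hJ : WSpec Z J) {s : Finset (Euc m)} (h : wFace Z J s) (h2 : 2 ≤ s.card) :
    simpDiam m s ≤ setDist m (convexHull ℝ (s : Set (Euc m))) Z ∧
    setDist m (convexHull ℝ (s : Set (Euc m))) Z ≤ 12 * Real.sqrt m * simpDiam m s := by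
  obtain ⟨d, hd, hC⟩ := h.top hm hJ
  have hsub := w_hull hC
  have hdZ := (h.2.1 d hd).1
  have hp := wpos (J d)
  have hdmem : d ∈ convexHull ℝ (s : Set (Euc m)) := subset_convexHull ℝ _ hd
  constructor
  · calc simpDiam m s ≤ Real.sqrt m * 2 ^ (J d) := by
          apply diam_le_of_forall_dist_le (by positivity)
          intro x hx y hy
          apply wdist_le hp.le
          intro i
          have a := hsub hx i
          have b := hsub hy i
          have c := whi_le (J d) (d i)
          rw [abs_le]; constructor <;> linarith
      _ ≤ _ := by
          apply le_csInf
          · exact Set.Nonempty.image2 ⟨d, hdmem⟩ hne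
          · rintro _ ⟨x, hx, z, hz, rfl⟩
            exact (hJ d hdZ).1 x (wC_star (hsub hx)) z hz
  · obtain ⟨c, hc, hcd⟩ := Finset.exists_mem_ne (show 1 < s.card by omega) d
    obtain ⟨i, -, -, h3, -⟩ := w_P4 hm hJ (h.2.1 c hc) (h.2.1 d hd) (hC c hc) hcd
    have h4 : 2 ^ (J d) / 2 ≤ simpDiam m s := by
      rw [← h3]
      refine (wcoord_le c d i).trans (dist_le_diam_of_mem ?_ (subset_convexHull ℝ _ hc) hdmem)
      exact isBounded_convexHull.2 s.finite_toSet.isBounded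
    have h5 : ¬ wA Z (J d + 1) d := fun hA => by
      have := (hJ d hdZ).2 _ hA; omega
    unfold wA at h5
    push Not at h5
    obtain ⟨p, hpp, z, hz, hlt⟩ := h5
    have e : (2 : ℝ) ^ (J d + 1) = 2 * 2 ^ (J d) := by
      rw [zpow_add_one₀ (by norm_num)]; ring
    have h6 : dist d p ≤ Real.sqrt m * 2 ^ (J d + 1) := by
      apply wdist_le (wpos _).le
      intro i
      have a := hpp i
      have b := wlo_le (J d + 1) (d i)
      have c := le_whi (J d + 1) (d i)
      rw [abs_le]; constructor <;> linarith
    have h7 : setDist m (convexHull ℝ (s : Set (Euc m))) Z ≤ dist d z := by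
      apply csInf_le
      · refine ⟨0, ?_⟩
        rintro _ ⟨x, -, y, -, rfl⟩
        exact dist_nonneg
      · exact ⟨d, hdmem, z, hz, rfl⟩
    have h8 := dist_triangle d p z
    rw [e] at hlt h6
    have h9 : Real.sqrt m * (2 ^ (J d) / 2) ≤ Real.sqrt m * simpDiam m s :=
      mul_le_mul_of_nonneg_left h4 (Real.sqrt_nonneg _)
    have h10 : 0 ≤ Real.sqrt m * 2 ^ (J d) := by positivity
    linarith

end aux

/-- **Lemma (Whitney triangulation, with finitely many similarity classes).**
For every `m ≥ 1` there are `D₁, D₂ > 0` and an integer `N ≥ 1`, depending only on `m`,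
such that every nonempty proper closed subset `Z ⊊ ℝ^m` admits an `m`-dimensional
simplicial complex `Σ` with `Σ^{(m)} = ℝ^m ∖ Z` satisfying the Whitney triangulation
conclusions and whose simplices fall into at most `N` equivalence classes under
rotation–translation–dilation equivalence. -/
theorem whitney_triangulation_finitely_many_classes (m : ℕ) (hm : 1 ≤ m) :
    ∃ D₁ D₂ : ℝ, ∃ N : ℕ, 0 < D₁ ∧ 0 < D₂ ∧ 1 ≤ N ∧
      ∀ Z : Set (Euc m), IsClosed Z → Z.Nonempty → Z ≠ Set.univ →
        ∃ K : Geometry.SimplicialComplex ℝ (Euc m),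
          WhitneyConclusions m D₁ D₂ Z K ∧
          ∃ reps : Fin N → Finset (Euc m),
            ∀ s ∈ K.faces, ∃ i : Fin N, SimplexEquiv m s (reps i) := by
  classical
  refine ⟨1 / 2, 1 + ∑ S ∈ (wGrid m).powerset, |simpDiam m S / betaLow m S|,
    (wGrid m).powerset.card, by norm_num, by positivity, ?_, ?_⟩
  · rw [Nat.one_le_iff_ne_zero, Finset.card_ne_zero]
    exact Finset.powerset_nonempty _
  intro Z hZ hne _
  have hex : ∀ x : Euc m, ∃ J : ℤ, x ∉ Z → wA Z J x ∧ ∀ j, wA Z j x → j ≤ J := by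
    intro x
    by_cases hx : x ∈ Z
    · exact ⟨0, fun h => absurd hx h⟩
    · obtain ⟨J, h⟩ := wJ_exists hm hZ hne hx
      exact ⟨J, fun _ => h⟩
  choose J hJ using hex
  have hJ : WSpec Z J := hJ
  refine ⟨wComplex hm hJ, ⟨?_, ?_, ?_⟩, ?_⟩
  · intro s hs
    have h1 := (wFace.indep hm hJ s.card rfl hs).card_le_finrank_succ
    have h2 := Submodule.finrank_le (vectorSpan ℝ (Set.range ((↑) : s → Euc m)))
    rw [finrank_euclideanSpace_fin] at h2
    rw [Fintype.card_coe] at h1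
    omega
  · ext x
    unfold skel
    simp only [Set.mem_iUnion, exists_prop]
    constructor
    · rintro ⟨s, ⟨hs, -⟩, hx⟩
      have hs : wFace Z J s := hs
      obtain ⟨d, hd, hC⟩ := hs.top hm hJ
      exact (w_P2 hm hJ (hs.2.1 d hd).1 (w_hull hC hx)).1
    · intro hx
      obtain ⟨s, h1, h2, h3⟩ := w_cover_top hm hJ hx
      exact ⟨s, ⟨h1, h2⟩, h3⟩
  · intro s hs hcard
    have hs : wFace Z J s := hs
    have h2 : 2 ≤ s.card := by omega
    obtain ⟨a1, a2⟩ := w_metric hm hne hJ hs h2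
    obtain ⟨b1, b2, b3⟩ := w_beta (wFace.indep hm hJ s.card rfl hs) h2
    have hB : 0 < betaHigh m s := lt_of_lt_of_le b1 b2
    refine ⟨a1, a2, ?_, ?_, ?_⟩
    · rw [lt_div_iff₀ hB]; linarith
    · exact div_le_div_of_nonneg_left (by linarith) b1 b2
    · obtain ⟨r, b, hr, hmem⟩ := w_class hm hJ hs
      have h3 : simpDiam m s / betaLow m s =
          simpDiam m (s.image (wf r b)) / betaLow m (s.image (wf r b)) := by
        rw [wf_simpDiam hr, wf_betaLow hr, mul_div_mul_left _ _ hr.ne']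
      have h4 := Finset.single_le_sum
        (f := fun S => |simpDiam m S / betaLow m S|) (fun S _ => abs_nonneg _) hmem
      have h5 := le_abs_self (simpDiam m (s.image (wf r b)) / betaLow m (s.image (wf r b)))
      rw [h3]
      linarith
  · refine ⟨fun i => ((wGrid m).powerset.equivFin.symm i).1, ?_⟩
    intro s hs
    obtain ⟨r, b, hr, hmem⟩ := w_class hm hJ hs
    refine ⟨(wGrid m).powerset.equivFin ⟨_, hmem⟩, r, LinearIsometryEquiv.refl ℝ (Euc m), b, hr,
      ?_, ?_⟩
    · exact LinearMap.det_id
    · simp only [Equiv.symm_apply_apply, Finset.coe_image]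
      rfl

end
end
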